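/- For n, k ≥ 1, the polynomial a_n^{(k)}(x) of the symmetric decomposition A_n^{(k)}(x) = a_n^{(k)}(x) + x·b_n^{(k)}(x) is γ-positive with center (n−1)/2: a_n^{(k)}(x) = Σ_{i=0}^{⌊(n-1)/2⌋} γ̄_{n,k,i} x^i (1+x)^{n−1−2i}, where γ̄_{n,k,i} counts increasing pruned even k-ary forests F on {1,...,n}, belonging to the class where the rightmost tree is a singleton or has its first k−1 root-children as leaves, with i old leaves, no young leaves, and no removable old leaves. -/

import Mathlib

open Polynomial
open scoped Classical

noncomputable section

/-!  Increasing pruned even `k`-ary forests on a linearly ordered label set `α` are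
encoded by parent functions `f : α → Option (α × Fin k)`: `f x = some (y, s)` means the
labeled node `x` is attached to the `s`-th (unlabeled) child of the labeled node `y`,
and `f x = none` means `x` is the root of a component.  The increasing condition says
that labels of the children of each node increase, so the ordered-tree structure is
determined by `f`; components are ordered by their (increasing) root labels.  -/

/-- The labeled node `u` has a labeled grand child (so it is an internal labeled node
carrying its `k` unlabeled children in the pruned tree). -/
def hasChild {α : Type} {k : ℕ} (f : α → Option (α × Fin k)) (u : α) : Prop :=
  ∃ x s, f x = some (u, s)

/-- `f` encodes an increasing pruned even `k`-ary forest: parents carry smaller labels. -/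
def IsForest {α : Type} [LT α] {k : ℕ} (f : α → Option (α × Fin k)) : Prop :=
  ∀ x y s, f x = some (y, s) → y < x

/-- `f` encodes an increasing pruned even `k`-ary tree: a forest with a unique root. -/
def IsTree {α : Type} [LT α] {k : ℕ} (f : α → Option (α × Fin k)) : Prop :=
  IsForest f ∧ ∃! r, f r = none

/-- `lleaf`: the number of labeled leaves. -/
noncomputable def lleafStat {α : Type} [Fintype α] {k : ℕ}
    (f : α → Option (α × Fin k)) : ℕ :=
  (Finset.univ.filter fun u => ¬ hasChild f u).card

/-- `si`: the number of singleton components (roots that are leaves). -/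
noncomputable def siStat {α : Type} [Fintype α] {k : ℕ}
    (f : α → Option (α × Fin k)) : ℕ :=
  (Finset.univ.filter fun u => f u = none ∧ ¬ hasChild f u).card

/-- A non-root labeled node is old if it carries the greatest label among all the
grand children of its grand parent. -/
def oldNode {α : Type} [LinearOrder α] {k : ℕ}
    (f : α → Option (α × Fin k)) (v : α) : Prop :=
  ∃ y s, f v = some (y, s) ∧ ∀ x : α, (∃ t, f x = some (y, t)) → x ≤ v

/-- A non-root labeled node that is not old is young. -/
def youngNode {α : Type} [LinearOrder α] {k : ℕ}
    (f : α → Option (α × Fin k)) (v : α) : Prop :=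
  (∃ y s, f v = some (y, s)) ∧ ¬ oldNode f v

/-- `oleaf`: the number of old labeled leaves. -/
noncomputable def oleafStat {α : Type} [LinearOrder α] [Fintype α] {k : ℕ}
    (f : α → Option (α × Fin k)) : ℕ :=
  (Finset.univ.filter fun v => oldNode f v ∧ ¬ hasChild f v).card

/-- `oint`: the number of old internal labeled nodes. -/
noncomputable def ointStat {α : Type} [LinearOrder α] [Fintype α] {k : ℕ}
    (f : α → Option (α × Fin k)) : ℕ :=
  (Finset.univ.filter fun v => oldNode f v ∧ hasChild f v).card

/-- `F` has no young leaves. -/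
def NoYoungLeaf {α : Type} [LinearOrder α] {k : ℕ}
    (f : α → Option (α × Fin k)) : Prop :=
  ∀ v : α, ¬ (youngNode f v ∧ ¬ hasChild f v)

/-- The generalized Foata–Strehl transformation `Φ_v`.  If `v` is an old internal node
with grand parent `u`, the subtrees hanging from the `k` children of `v` are transferred
(slotwise) to the corresponding children of `u`, turning `v` into a leaf; if `v` is a
young leaf, all subtrees hanging from the children of `u` whose root labels exceed `v`
are transferred (slotwise) to `k` freshly attached children of `v`; otherwise nothing
happens. -/
noncomputable def phi {α : Type} [LinearOrder α] {k : ℕ} (v : α)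
    (f : α → Option (α × Fin k)) : α → Option (α × Fin k) :=
  match f v with
  | none => f
  | some (u, _) =>
    if ∀ x : α, (∃ t, f x = some (u, t)) → x ≤ v then
      -- `v` is old
      if hasChild f v then
        (fun x => match f x with
          | some (w, j) => if w = v then some (u, j) else some (w, j)
          | none => none)
      else f
    else
      -- `v` is young
      if hasChild f v then f
      else
        (fun x => match f x with
          | some (w, j) => if w = u ∧ v < x then some (v, j) else some (w, j)
          | none => none)

/-- `u` is a removable old leaf of the forest `f`: an old leaf that is a grand child of
the root `r` of its component, the only leaf among the grand children of `r`, the first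
`k-1` children of `r` are leaves, and the label of `u` is smaller than the label of
every later root. -/
def removableOldLeaf {α : Type} [LinearOrder α] {k : ℕ}
    (f : α → Option (α × Fin k)) (u : α) : Prop :=
  oldNode f u ∧ ¬ hasChild f u ∧
  ∃ (r : α) (s : Fin k), f u = some (r, s) ∧ f r = none ∧
    (∀ x : α, (∃ t, f x = some (r, t)) → x ≠ u → hasChild f x) ∧
    (∀ (x : α) (j : Fin k), (j : ℕ) < k - 1 → f x ≠ some (r, j)) ∧
    (∀ r' : α, f r' = none → r < r' → u < r')

/-- `u` is a removable young leaf of the forest `f`: a young leaf that is a grand child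
of the root `r` of the rightmost component such that after applying `Φ_u` the first
`k-1` children of `r` are leaves. -/
noncomputable def removableYoungLeaf {α : Type} [LinearOrder α] {k : ℕ}
    (f : α → Option (α × Fin k)) (u : α) : Prop :=
  youngNode f u ∧ ¬ hasChild f u ∧
  ∃ (r : α) (s : Fin k), f u = some (r, s) ∧ f r = none ∧
    (∀ r' : α, f r' = none → r' ≤ r) ∧
    (∀ (x : α) (j : Fin k), (j : ℕ) < k - 1 → phi u f x ≠ some (r, j))

/-- The forest lies in the class `\overline{𝓕}_n(k)`: the rightmost tree is a singleton
or the first `k-1` children of its root are leaves. -/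
def inBarClass {α : Type} [LinearOrder α] {k : ℕ}
    (f : α → Option (α × Fin k)) : Prop :=
  ∃ r : α, f r = none ∧ (∀ r' : α, f r' = none → r' ≤ r) ∧
    (¬ hasChild f r ∨
      ∀ (x : α) (j : Fin k), (j : ℕ) < k - 1 → f x ≠ some (r, j))

/-- Number of excedances of a permutation of `{1,…,n}`. -/
def excStat {n : ℕ} (σ : Equiv.Perm (Fin n)) : ℕ :=
  (Finset.univ.filter fun i : Fin n => (i : ℕ) < (σ i : ℕ)).card

/-- Number of cycles (including fixed points) in the disjoint cycle decomposition. -/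
def cycStat {n : ℕ} (σ : Equiv.Perm (Fin n)) : ℕ :=
  σ.cycleType.card + (Finset.univ.filter fun i => σ i = i).card

/-- `A_n^{(k)}(x) = Σ_{π ∈ S_n} x^{exc π} k^{n - cyc π}`, the `1/k`-Eulerian polynomial. -/
def Apoly (k n : ℕ) : Polynomial ℝ :=
  ∑ σ : Equiv.Perm (Fin n), X ^ excStat σ * (C (k : ℝ)) ^ (n - cycStat σ)


/-! ### Part 1: the `1/k`-Eulerian polynomials count forests by non-root leaves -/

def nlStat {n k : ℕ} (f : Fin n → Option (Fin n × Fin k)) : ℕ :=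
  (Finset.univ.filter fun u => f u ≠ none ∧ ¬ hasChild f u).card

def FS (n k : ℕ) : Finset (Fin n → Option (Fin n × Fin k)) :=
  Finset.univ.filter fun f => IsForest f

def Fpoly (k n : ℕ) : Polynomial ℝ := ∑ f ∈ FS n k, X ^ nlStat f

def insF {n k : ℕ} (f : Fin n → Option (Fin n × Fin k)) (o : Option (Fin n × Fin k)) :
    Fin (n + 1) → Option (Fin (n + 1) × Fin k) :=
  Fin.lastCases (o.map (Prod.map Fin.castSucc id))
    (fun i => (f i).map (Prod.map Fin.castSucc id))

lemma insF_last {n k : ℕ} (f : Fin n → Option (Fin n × Fin k)) (o : Option (Fin n × Fin k)) :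
    insF f o (Fin.last n) = o.map (Prod.map Fin.castSucc id) := by
  simp [insF]

lemma insF_castSucc {n k : ℕ} (f : Fin n → Option (Fin n × Fin k))
    (o : Option (Fin n × Fin k)) (i : Fin n) :
    insF f o i.castSucc = (f i).map (Prod.map Fin.castSucc id) := by
  simp [insF]

lemma map_cs_eq_some {n k : ℕ} (o : Option (Fin n × Fin k)) (y : Fin n) (s : Fin k) :
    o.map (Prod.map Fin.castSucc id) = some (y.castSucc, s) ↔ o = some (y, s) := by
  rcases o with _ | ⟨a, b⟩ <;> simp

lemma map_cs_ne_last {n k : ℕ} (o : Option (Fin n × Fin k)) (s : Fin k) :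
    o.map (Prod.map Fin.castSucc id) ≠ some (Fin.last n, s) := by
  rcases o with _ | ⟨a, b⟩ <;> simp [Fin.ext_iff]
  intro h; have := a.2; omega

lemma exists_map_cs {n k : ℕ} (o : Option (Fin (n+1) × Fin k))
    (h : ∀ y s, o = some (y, s) → y < Fin.last n) :
    ∃ o' : Option (Fin n × Fin k), o'.map (Prod.map Fin.castSucc id) = o := by
  rcases o with _ | ⟨a, b⟩
  · exact ⟨none, rfl⟩
  · have := h a b rfl
    refine ⟨some (a.castPred this.ne, b), by simp⟩

lemma hasChild_insF_last {n k : ℕ} (f : Fin n → Option (Fin n × Fin k))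
    (o : Option (Fin n × Fin k)) : ¬ hasChild (insF f o) (Fin.last n) := by
  rintro ⟨x, s, h⟩
  induction x using Fin.lastCases with
  | last => rw [insF_last] at h; exact map_cs_ne_last _ _ h
  | cast i => rw [insF_castSucc] at h; exact map_cs_ne_last _ _ h

lemma hasChild_insF_castSucc {n k : ℕ} (f : Fin n → Option (Fin n × Fin k))
    (o : Option (Fin n × Fin k)) (y : Fin n) :
    hasChild (insF f o) y.castSucc ↔ hasChild f y ∨ ∃ s, o = some (y, s) := by
  constructor
  · rintro ⟨x, s, h⟩
    induction x using Fin.lastCases with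
    | last => rw [insF_last, map_cs_eq_some] at h; exact Or.inr ⟨s, h⟩
    | cast i => rw [insF_castSucc, map_cs_eq_some] at h; exact Or.inl ⟨i, s, h⟩
  · rintro (⟨x, s, h⟩ | ⟨s, h⟩)
    · exact ⟨x.castSucc, s, by rw [insF_castSucc, map_cs_eq_some]; exact h⟩
    · exact ⟨Fin.last n, s, by rw [insF_last, map_cs_eq_some]; exact h⟩

lemma nlStat_insF_none {n k : ℕ} (f : Fin n → Option (Fin n × Fin k)) :
    nlStat (insF f none) = nlStat f := by
  unfold nlStat
  rw [Finset.card_filter, Finset.card_filter, Fin.sum_univ_castSucc]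
  simp [insF_last, insF_castSucc, hasChild_insF_castSucc]

lemma nlStat_insF_some {n k : ℕ} (f : Fin n → Option (Fin n × Fin k)) (y : Fin n) (s : Fin k) :
    nlStat (insF f (some (y, s))) =
      if f y ≠ none ∧ ¬ hasChild f y then nlStat f else nlStat f + 1 := by
  have h1 : nlStat (insF f (some (y, s))) =
      (Finset.univ.filter fun u => (f u ≠ none ∧ ¬ hasChild f u) ∧ u ≠ y).card + 1 := by
    unfold nlStat
    rw [Finset.card_filter, Finset.card_filter, Fin.sum_univ_castSucc]
    congr 1
    · apply Finset.sum_congr rfl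
      intro u _
      simp only [insF_castSucc, hasChild_insF_castSucc]
      congr 1
      simp [and_assoc, eq_comm]
    · simp [insF_last, hasChild_insF_last]
  rw [h1]
  have h2 : (Finset.univ.filter fun u => (f u ≠ none ∧ ¬ hasChild f u) ∧ u ≠ y) =
      (Finset.univ.filter fun u => (f u ≠ none ∧ ¬ hasChild f u)).erase y := by
    ext u; simp; tauto
  rw [h2]
  split_ifs with h
  · unfold nlStat
    rw [Finset.card_erase_of_mem (by simpa using h)]
    have : 0 < (Finset.univ.filter fun u => (f u ≠ none ∧ ¬ hasChild f u)).card :=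
      Finset.card_pos.2 ⟨y, by simpa using h⟩
    omega
  · unfold nlStat
    rw [Finset.erase_eq_of_notMem (by simpa using h)]

lemma isForest_insF {n k : ℕ} (f : Fin n → Option (Fin n × Fin k))
    (o : Option (Fin n × Fin k)) : IsForest (insF f o) ↔ IsForest f := by
  constructor
  · intro h x y s hx
    have := h x.castSucc y.castSucc s (by rw [insF_castSucc, map_cs_eq_some]; exact hx)
    simpa using this
  · intro h x y s hx
    induction x using Fin.lastCases with
    | last =>
      rw [insF_last] at hx
      rcases Fin.eq_castSucc_or_eq_last y with ⟨y', rfl⟩ | rfl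
      · exact Fin.castSucc_lt_last _
      · exact absurd hx (map_cs_ne_last _ _)
    | cast i =>
      rw [insF_castSucc] at hx
      rcases Fin.eq_castSucc_or_eq_last y with ⟨y', rfl⟩ | rfl
      · rw [map_cs_eq_some] at hx; simpa using h _ _ _ hx
      · exact absurd hx (map_cs_ne_last _ _)

lemma sum_FS_succ {n k : ℕ} (g : (Fin (n+1) → Option (Fin (n+1) × Fin k)) → Polynomial ℝ) :
    ∑ f ∈ FS (n+1) k, g f = ∑ f ∈ FS n k, ∑ o, g (insF f o) := by
  rw [← Finset.sum_product']
  symm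
  refine Finset.sum_bij (fun p _ => insF p.1 p.2) ?_ ?_ ?_ ?_
  · rintro ⟨f, o⟩ h
    simp only [FS, Finset.mem_product, Finset.mem_filter, Finset.mem_univ, true_and,
      and_true] at h ⊢
    exact (isForest_insF _ _).2 h
  · rintro ⟨f, o⟩ _ ⟨f', o'⟩ _ h
    have inj : Function.Injective
        (Option.map (Prod.map Fin.castSucc id) : Option (Fin n × Fin k) → _) :=
      Option.map_injective ((Fin.castSucc_injective n).prodMap Function.injective_id)
    ext1
    · funext i
      have := congrFun h i.castSucc
      simp only [insF_castSucc] at this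
      exact inj this
    · have := congrFun h (Fin.last n)
      simp only [insF_last] at this
      exact inj this
  · intro F hF
    simp only [FS, Finset.mem_filter, Finset.mem_univ, true_and] at hF
    have h1 : ∀ x, ∃ o' : Option (Fin n × Fin k),
        o'.map (Prod.map Fin.castSucc id) = F x := fun x =>
      exists_map_cs _ (fun y s h => lt_of_lt_of_le (hF _ _ _ h) (Fin.le_last _))
    choose G hG using h1
    have hG' : insF (fun i => G i.castSucc) (G (Fin.last n)) = F := by
      funext x
      induction x using Fin.lastCases with
      | last => rw [insF_last, hG]
      | cast i => rw [insF_castSucc, hG]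
    refine ⟨(fun i => G i.castSucc, G (Fin.last n)), ?_, hG'⟩
    simp only [FS, Finset.mem_product, Finset.mem_filter, Finset.mem_univ, true_and, and_true]
    rw [← isForest_insF _ (G (Fin.last n)), hG']
    exact hF
  · intros; rfl

def stepP (k n : ℕ) (p : Polynomial ℝ) : Polynomial ℝ :=
  (1 + C ((k : ℝ) * n) * X) * p + C (k : ℝ) * X * (1 - X) * derivative p

lemma stepP_sum {ι : Type*} (k n : ℕ) (s : Finset ι) (p : ι → Polynomial ℝ) :
    stepP k n (∑ i ∈ s, p i) = ∑ i ∈ s, stepP k n (p i) := by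
  simp only [stepP, derivative_sum, Finset.mul_sum, Finset.sum_add_distrib]

lemma stepP_pow (k n e : ℕ) (c : ℝ) : stepP k n (X ^ e * C c) =
    X ^ e * C c * (1 + C (k : ℝ) * (C (e : ℝ) + C ((n : ℝ) - e) * X)) := by
  unfold stepP
  rcases e with _ | e
  · simp; ring
  · simp; ring

lemma Fpoly_succ (k n : ℕ) : Fpoly k (n+1) = stepP k n (Fpoly k n) := by
  unfold Fpoly
  rw [sum_FS_succ, stepP_sum]
  apply Finset.sum_congr rfl
  intro f _
  have := stepP_pow k n (nlStat f) 1
  simp only [map_one, mul_one] at this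
  rw [this, Fintype.sum_option, nlStat_insF_none, Fintype.sum_prod_type]
  simp only [nlStat_insF_some, Finset.sum_const, Finset.card_univ, Fintype.card_fin]
  have h3 : ∀ y : Fin n, (X : Polynomial ℝ) ^ (if f y ≠ none ∧ ¬ hasChild f y then nlStat f else nlStat f + 1)
     = X ^ nlStat f * (X + (1 - X) * if f y ≠ none ∧ ¬ hasChild f y then 1 else 0) := by
    intro y; split_ifs <;> ring
  simp only [h3]
  rw [← Finset.smul_sum, ← Finset.mul_sum, Finset.sum_add_distrib, ← Finset.mul_sum,
    Finset.sum_boole]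
  change _ + k • (_ * (_ + _ * ((nlStat f : ℕ) : Polynomial ℝ))) = _
  simp
  ring

/-! ### The permutation side of the recurrence -/

/-- Reflection length: sum of `length - 1` over the cycles. -/
def rlen {α : Type} [Fintype α] [DecidableEq α] (σ : Equiv.Perm α) : ℕ :=
  σ.cycleType.sum - σ.cycleType.card

lemma card_le_sum_cycleType {α : Type} [Fintype α] [DecidableEq α] (σ : Equiv.Perm α) :
    σ.cycleType.card ≤ σ.cycleType.sum := by
  have := Multiset.card_nsmul_le_sum (s := σ.cycleType) (a := 1)
    (fun x hx => (Equiv.Perm.one_lt_of_mem_cycleType hx).le)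
  simpa using this

lemma sub_cycStat {n : ℕ} (σ : Equiv.Perm (Fin n)) : n - cycStat σ = rlen σ := by
  unfold cycStat rlen
  have h1 := Equiv.Perm.sum_cycleType σ
  have h2 : (Finset.univ.filter fun i => σ i = i).card + σ.support.card = n := by
    have := Finset.card_filter_add_card_filter_not (s := (Finset.univ : Finset (Fin n)))
      (fun i => σ i = i)
    rw [Finset.card_univ, Fintype.card_fin] at this
    have e : σ.support = Finset.univ.filter fun i => ¬ σ i = i := by
      ext i; simp [Equiv.Perm.mem_support]
    rw [e]; exact this
  have h3 := card_le_sum_cycleType σ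
  omega

lemma rlen_mul {α : Type} [Fintype α] [DecidableEq α] {σ τ : Equiv.Perm α} (h : σ.Disjoint τ) :
    rlen (σ * τ) = rlen σ + rlen τ := by
  unfold rlen
  have h1 := card_le_sum_cycleType σ
  have h2 := card_le_sum_cycleType τ
  rw [h.cycleType_mul, Multiset.sum_add, Multiset.card_add]
  omega

lemma rlen_cycle_swap {α : Type} [Fintype α] [DecidableEq α] {c : Equiv.Perm α} (hc : c.IsCycle) (a : α)
    (ha : c a ≠ a) : rlen c = rlen (Equiv.swap a (c a) * c) + 1 := by
  by_cases h : c (c a) = a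
  · have h1 := hc.eq_swap_of_apply_apply_eq_self ha h
    have h2 : Equiv.swap a (c a) * c = 1 := by
      conv_lhs => rw [h1]
      simp
    rw [h2]
    unfold rlen
    rw [hc.cycleType]
    conv_lhs => rw [h1]
    rw [Equiv.Perm.card_support_swap (Ne.symm ha)]
    simp
  · have h1 := hc.swap_mul ha h
    unfold rlen
    rw [hc.cycleType, h1.cycleType, Equiv.Perm.support_swap_mul_eq _ _ h]
    have h2 := hc.two_le_card_support
    have h3 : 2 ≤ (c.support \ {a}).card := by
      rw [← Equiv.Perm.support_swap_mul_eq _ _ h]; exact h1.two_le_card_support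
    have h4 : (c.support \ {a}).card = c.support.card - 1 := by
      rw [← Finset.erase_eq, Finset.card_erase_of_mem (by simpa using ha)]
    simp only [Multiset.sum_singleton, Multiset.card_singleton]
    omega

lemma rlen_swap {α : Type} [Fintype α] [DecidableEq α] (σ : Equiv.Perm α) (a : α)
    (ha : σ a ≠ a) : rlen σ = rlen (Equiv.swap a (σ a) * σ) + 1 := by
  set c := σ.cycleOf a with hcdef
  have hmem : c ∈ σ.cycleFactorsFinset :=
    Equiv.Perm.cycleOf_mem_cycleFactorsFinset_iff.2 (by simpa using ha)
  have hc : c.IsCycle := (Equiv.Perm.mem_cycleFactorsFinset_iff.1 hmem).1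
  have hd := (Equiv.Perm.disjoint_mul_inv_of_mem_cycleFactorsFinset hmem).symm
  have hca : c a = σ a := by simp [hcdef]
  have hcomm : c * (σ * c⁻¹) = σ := by
    rw [hd.commute.eq]; simp
  have hd2 : (Equiv.swap a (c a) * c).Disjoint (σ * c⁻¹) := by
    rw [Equiv.Perm.disjoint_iff_disjoint_support] at hd ⊢
    refine hd.mono_left ?_
    intro x hx
    rw [Equiv.Perm.mem_support] at hx ⊢
    intro hcx
    apply hx
    rw [Equiv.Perm.mul_apply, hcx]
    apply Equiv.swap_apply_of_ne_of_ne
    · rintro rfl; exact ha (hca ▸ hcx)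
    · rintro rfl
      exact ha (hca ▸ c.injective hcx)
  have e1 : rlen σ = rlen c + rlen (σ * c⁻¹) := by rw [← rlen_mul hd, hcomm]
  have e2 : rlen (Equiv.swap a (σ a) * σ) = rlen (Equiv.swap a (c a) * c) + rlen (σ * c⁻¹) := by
    rw [← rlen_mul hd2, mul_assoc, hcomm, hca]
  rw [e1, e2, rlen_cycle_swap hc a (by rwa [hca])]
  omega

lemma rlen_ext {n : ℕ} (e : Equiv.Perm (Fin n)) :
    rlen (Equiv.Perm.decomposeFin.symm (0, e)) = rlen e := by
  let g : Fin n ≃ {x : Fin (n+1) // x ≠ 0} :=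
    { toFun := fun i => ⟨i.succ, Fin.succ_ne_zero i⟩
      invFun := fun x => x.1.pred x.2
      left_inv := fun i => by simp
      right_inv := fun x => by simp }
  have h : Equiv.Perm.decomposeFin.symm (0, e) = e.extendDomain g := by
    ext x
    induction x using Fin.cases with
    | zero =>
      rw [Equiv.Perm.decomposeFin_symm_apply_zero, Equiv.Perm.extendDomain_apply_not_subtype]
      simp
    | succ i =>
      rw [Equiv.Perm.decomposeFin_symm_apply_succ]
      have : (g i : Fin (n+1)) = i.succ := rfl
      rw [← this, Equiv.Perm.extendDomain_apply_image]
      simp [g]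
  unfold rlen
  rw [h, Equiv.Perm.cycleType_extendDomain]

lemma rlen_decompose {n : ℕ} (e : Equiv.Perm (Fin n)) (p : Fin n) :
    rlen (Equiv.Perm.decomposeFin.symm (p.succ, e)) = rlen e + 1 := by
  have h0 : Equiv.Perm.decomposeFin.symm (p.succ, e) 0 = p.succ := by simp
  rw [rlen_swap _ 0 (by rw [h0]; exact Fin.succ_ne_zero p), ← rlen_ext e]
  congr 2
  rw [h0]
  ext x
  induction x using Fin.cases with
  | zero => simp
  | succ i =>
    rw [Equiv.Perm.mul_apply, Equiv.Perm.decomposeFin_symm_apply_succ,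
      Equiv.Perm.decomposeFin_symm_apply_succ, Equiv.swap_apply_self]
    simp

lemma exc_decompose_zero {n : ℕ} (e : Equiv.Perm (Fin n)) :
    excStat (Equiv.Perm.decomposeFin.symm (0, e)) = excStat e := by
  unfold excStat
  rw [Finset.card_filter, Finset.card_filter, Fin.sum_univ_succ]
  simp

lemma exc_decompose_succ {n : ℕ} (e : Equiv.Perm (Fin n)) (x : Fin n) :
    excStat (Equiv.Perm.decomposeFin.symm ((e x).succ, e)) =
      if (x : ℕ) < (e x : ℕ) then excStat e else excStat e + 1 := by
  have h1 : excStat (Equiv.Perm.decomposeFin.symm ((e x).succ, e)) =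
      1 + (Finset.univ.filter fun i : Fin n => (i : ℕ) < (e i : ℕ) ∧ i ≠ x).card := by
    unfold excStat
    rw [Finset.card_filter, Finset.card_filter, Fin.sum_univ_succ]
    refine congrArg₂ (· + ·) ?_ ?_
    · simp
    · apply Finset.sum_congr rfl
      intro i _
      rw [Equiv.Perm.decomposeFin_symm_apply_succ]
      by_cases hi : i = x
      · subst hi; simp
      · rw [Equiv.swap_apply_of_ne_of_ne (Fin.succ_ne_zero _) (by simpa using hi)]
        simp [hi]
  have h2 : (Finset.univ.filter fun i : Fin n => (i : ℕ) < (e i : ℕ) ∧ i ≠ x) =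
      (Finset.univ.filter fun i : Fin n => (i : ℕ) < (e i : ℕ)).erase x := by
    ext u; simp [and_comm]
  rw [h1, h2]
  unfold excStat
  split_ifs with h
  · rw [Finset.card_erase_of_mem (by simpa using h)]
    have : 0 < (Finset.univ.filter fun i : Fin n => (i : ℕ) < (e i : ℕ)).card :=
      Finset.card_pos.2 ⟨x, by simpa using h⟩
    omega
  · rw [Finset.erase_eq_of_notMem (by simpa using h)]
    omega

lemma Apoly_succ (k n : ℕ) : Apoly k (n+1) = stepP k n (Apoly k n) := by
  unfold Apoly
  simp only [sub_cycStat]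
  rw [stepP_sum]
  rw [← Equiv.sum_comp (Equiv.Perm.decomposeFin.symm), Fintype.sum_prod_type_right]
  apply Finset.sum_congr rfl
  intro e _
  rw [← C_pow, stepP_pow, Fin.sum_univ_succ, exc_decompose_zero, rlen_ext]
  simp only [rlen_decompose]
  rw [← Equiv.sum_comp e]
  simp only [exc_decompose_succ]
  have h3 : ∀ y : Fin n,
      (X : Polynomial ℝ) ^ (if (y : ℕ) < (e y : ℕ) then excStat e else excStat e + 1)
     = X ^ excStat e * (X + (1 - X) * if (y : ℕ) < (e y : ℕ) then 1 else 0) := by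
    intro y; split_ifs <;> ring
  simp only [h3]
  rw [← Finset.sum_mul, ← Finset.mul_sum, Finset.sum_add_distrib, ← Finset.mul_sum,
    Finset.sum_boole]
  change _ + (_ * (_ + _ * ((excStat e : ℕ) : Polynomial ℝ))) * _ = _
  simp
  ring

lemma Apoly_eq_Fpoly (k n : ℕ) : Apoly k n = Fpoly k n := by
  induction n with
  | zero =>
    have h1 : FS 0 k = Finset.univ := by
      unfold FS; apply Finset.filter_true_of_mem; intro f _ x; exact x.elim0
    simp [Apoly, Fpoly, excStat, nlStat, h1]
  | succ n ih => rw [Apoly_succ, Fpoly_succ, ih]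

/-! ### Part 2: the generalized Foata–Strehl action -/

section FS
variable {n k : ℕ} {f : Fin n → Option (Fin n × Fin k)} {u v : Fin n} {s : Fin k}

lemma phi_young (hv : f v = some (u, s)) (hnc : ¬ hasChild f v)
    (hy : ∃ x t, f x = some (u, t) ∧ v < x) (x : Fin n) :
    phi v f x = (match f x with
          | some (w, j) => if w = u ∧ v < x then some (v, j) else some (w, j)
          | none => none) := by
  have h1 : ¬ ∀ x : Fin n, (∃ t, f x = some (u, t)) → x ≤ v := by
    obtain ⟨x, t, h, hl⟩ := hy
    intro hh
    exact absurd (hh x ⟨t, h⟩) (not_le.2 hl)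
  unfold phi
  rw [hv]
  simp only [if_neg h1, if_neg hnc]
  rcases f x with _ | ⟨w, j⟩
  · rfl
  · simp only

lemma phi_old (hv : f v = some (u, s)) (hc : hasChild f v)
    (ho : ∀ x : Fin n, (∃ t, f x = some (u, t)) → x ≤ v) (x : Fin n) :
    phi v f x = (match f x with
          | some (w, j) => if w = v then some (u, j) else some (w, j)
          | none => none) := by
  unfold phi
  rw [hv]
  simp only [if_pos ho, if_pos hc]
  rcases f x with _ | ⟨w, j⟩
  · rfl
  · simp only

lemma phi_young_iff (hv : f v = some (u, s)) (hnc : ¬ hasChild f v)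
    (hy : ∃ x t, f x = some (u, t) ∧ v < x) (x w : Fin n) (j : Fin k) :
    phi v f x = some (w, j) ↔
      (w = v ∧ f x = some (u, j) ∧ v < x) ∨ (f x = some (w, j) ∧ ¬ (w = u ∧ v < x)) := by
  rw [phi_young hv hnc hy]
  rcases h : f x with _ | ⟨w', j'⟩
  · simp
  · have : w' ≠ v := fun e => hnc ⟨x, j', e ▸ h⟩
    simp only
    split_ifs with h1
    · simp only [Option.some.injEq, Prod.mk.injEq]
      constructor
      · rintro ⟨rfl, rfl⟩; exact Or.inl ⟨rfl, ⟨h1.1, rfl⟩, h1.2⟩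
      · rintro (⟨rfl, ⟨_, rfl⟩, _⟩ | ⟨⟨rfl, rfl⟩, h2⟩)
        · exact ⟨rfl, rfl⟩
        · exact absurd h1 h2
    · simp only [Option.some.injEq, Prod.mk.injEq]
      constructor
      · rintro ⟨rfl, rfl⟩; exact Or.inr ⟨⟨rfl, rfl⟩, h1⟩
      · rintro (⟨rfl, ⟨rfl, rfl⟩, h3⟩ | ⟨⟨rfl, rfl⟩, h2⟩)
        · exact absurd ⟨rfl, h3⟩ h1
        · exact ⟨rfl, rfl⟩

lemma phi_young_none (hv : f v = some (u, s)) (hnc : ¬ hasChild f v)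
    (hy : ∃ x t, f x = some (u, t) ∧ v < x) (x : Fin n) :
    phi v f x = none ↔ f x = none := by
  rw [phi_young hv hnc hy]
  rcases h : f x with _ | ⟨w', j'⟩
  · simp
  · simp only; split_ifs <;> simp

lemma phi_old_iff (hv : f v = some (u, s)) (hc : hasChild f v)
    (ho : ∀ x : Fin n, (∃ t, f x = some (u, t)) → x ≤ v) (x w : Fin n) (j : Fin k) :
    phi v f x = some (w, j) ↔
      (w = u ∧ f x = some (v, j)) ∨ (w ≠ v ∧ f x = some (w, j)) := by
  rw [phi_old hv hc ho]
  rcases h : f x with _ | ⟨w', j'⟩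
  · simp
  · simp only
    split_ifs with h1
    · simp only [Option.some.injEq, Prod.mk.injEq]
      constructor
      · rintro ⟨rfl, rfl⟩; exact Or.inl ⟨rfl, h1, rfl⟩
      · rintro (⟨rfl, _, rfl⟩ | ⟨h2, rfl, rfl⟩)
        · exact ⟨rfl, rfl⟩
        · exact absurd h1 h2
    · simp only [Option.some.injEq, Prod.mk.injEq]
      constructor
      · rintro ⟨rfl, rfl⟩; exact Or.inr ⟨h1, rfl, rfl⟩
      · rintro (⟨rfl, h2, rfl⟩ | ⟨h2, rfl, rfl⟩)
        · exact absurd h2 h1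
        · exact ⟨rfl, rfl⟩

lemma opt_ext {β γ : Type*} {a b : Option (β × γ)} (h : ∀ w j, a = some (w, j) ↔ b = some (w, j)) :
    a = b := by
  rcases a with _ | ⟨a1, a2⟩
  · rcases b with _ | ⟨b1, b2⟩
    · rfl
    · exact absurd ((h b1 b2).2 rfl) (by simp)
  · exact ((h a1 a2).1 rfl).symm

def isYL (f : Fin n → Option (Fin n × Fin k)) (v : Fin n) : Prop := youngNode f v ∧ ¬ hasChild f v
def isOI (f : Fin n → Option (Fin n × Fin k)) (v : Fin n) : Prop := oldNode f v ∧ hasChild f v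
def isOL (f : Fin n → Option (Fin n × Fin k)) (v : Fin n) : Prop := oldNode f v ∧ ¬ hasChild f v

lemma isYL_iff : isYL f v ↔ ∃ u s, f v = some (u, s) ∧ ¬ hasChild f v ∧
    ∃ x t, f x = some (u, t) ∧ v < x := by
  constructor
  · rintro ⟨⟨⟨u, s, h⟩, h2⟩, h3⟩
    refine ⟨u, s, h, h3, ?_⟩
    by_contra hcon
    apply h2
    refine ⟨u, s, h, ?_⟩
    rintro x ⟨t, ht⟩
    by_contra hx
    exact hcon ⟨x, t, ht, not_le.1 hx⟩
  · rintro ⟨u, s, h, h3, x, t, hx, hl⟩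
    refine ⟨⟨⟨u, s, h⟩, ?_⟩, h3⟩
    rintro ⟨u', s', h', h4⟩
    rw [h] at h'
    simp only [Option.some.injEq, Prod.mk.injEq] at h'
    obtain ⟨rfl, rfl⟩ := h'
    exact absurd (h4 x ⟨t, hx⟩) (not_le.2 hl)

/-- everything about `Φ_v` at a young leaf -/
lemma phi_of_YL (hf : IsForest f) (h : isYL f v) :
    IsForest (phi v f) ∧ isOI (phi v f) v ∧ phi v (phi v f) = f ∧
    (∀ w, phi v f w = none ↔ f w = none) ∧
    (∀ w, w ≠ v → (hasChild (phi v f) w ↔ hasChild f w)) ∧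
    (∀ w, w ≠ v → (oldNode (phi v f) w ↔ oldNode f w)) := by
  obtain ⟨u, s, hv, hnc, hy⟩ := isYL_iff.1 h
  have huv : u < v := hf _ _ _ hv
  have key := phi_young_iff hv hnc hy
  have hgv : phi v f v = some (u, s) := by
    rw [key]; right; exact ⟨hv, fun h => lt_irrefl _ h.2⟩
  have hgc : hasChild (phi v f) v := by
    obtain ⟨x, t, hx, hl⟩ := hy
    exact ⟨x, t, (key _ _ _).2 (Or.inl ⟨rfl, hx, hl⟩)⟩
  have hgo : ∀ x : Fin n, (∃ t, phi v f x = some (u, t)) → x ≤ v := by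
    rintro x ⟨t, ht⟩
    rw [key] at ht
    rcases ht with ⟨e, _⟩ | ⟨_, h2⟩
    · exact absurd e huv.ne
    · by_contra hx; exact h2 ⟨rfl, not_le.1 hx⟩
  refine ⟨?_, ⟨⟨u, s, hgv, hgo⟩, hgc⟩, ?_, phi_young_none hv hnc hy, ?_, ?_⟩
  · intro x y j hx
    rw [key] at hx
    rcases hx with ⟨rfl, h1, h2⟩ | ⟨h1, _⟩
    · exact h2
    · exact hf _ _ _ h1
  · funext x
    apply opt_ext
    intro w j
    rw [phi_old_iff hgv hgc hgo, key, key]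
    constructor
    · rintro (⟨rfl, (⟨_, h1, _⟩ | ⟨h1, _⟩)⟩ | ⟨h0, (⟨rfl, _⟩ | ⟨h1, _⟩)⟩)
      · exact h1
      · exact absurd ⟨x, j, h1⟩ hnc
      · exact absurd rfl h0
      · exact h1
    · intro h1
      have hw : w ≠ v := fun e => hnc ⟨x, j, e ▸ h1⟩
      by_cases h2 : w = u ∧ v < x
      · left; refine ⟨h2.1, Or.inl ⟨rfl, h2.1 ▸ h1, h2.2⟩⟩
      · right; exact ⟨hw, Or.inr ⟨h1, h2⟩⟩
  · intro w hw
    constructor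
    · rintro ⟨x, j, hx⟩
      rw [key] at hx
      rcases hx with ⟨e, _⟩ | ⟨h1, _⟩
      · exact absurd e hw
      · exact ⟨x, j, h1⟩
    · rintro ⟨x, j, hx⟩
      by_cases hwu : w = u
      · subst hwu; exact ⟨v, s, hgv⟩
      · exact ⟨x, j, (key _ _ _).2 (Or.inr ⟨hx, fun h => hwu h.1⟩)⟩
  · intro w hw
    constructor
    · rintro ⟨y, j, h1, h2⟩
      rw [key] at h1
      rcases h1 with ⟨rfl, h3, h4⟩ | ⟨h3, h4⟩
      · refine ⟨u, j, h3, ?_⟩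
        rintro x ⟨t, ht⟩
        by_cases hx : y < x
        · exact h2 x ⟨t, (key _ _ _).2 (Or.inl ⟨rfl, ht, hx⟩)⟩
        · exact (not_lt.1 hx).trans h4.le
      · refine ⟨y, j, h3, ?_⟩
        by_cases hyu : y = u
        · subst hyu
          have h5 : w < v := lt_of_le_of_ne (not_lt.1 fun h => h4 ⟨rfl, h⟩) hw
          exact absurd (h2 v ⟨s, hgv⟩) (not_le.2 h5)
        · rintro x ⟨t, ht⟩
          exact h2 x ⟨t, (key _ _ _).2 (Or.inr ⟨ht, fun h => hyu h.1⟩)⟩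
    · rintro ⟨y, j, h1, h2⟩
      by_cases hyu : y = u
      · subst hyu
        have h5 : v < w := by
          obtain ⟨x, t, hx, hl⟩ := hy
          exact lt_of_lt_of_le hl (h2 x ⟨t, hx⟩)
        refine ⟨v, j, (key _ _ _).2 (Or.inl ⟨rfl, h1, h5⟩), ?_⟩
        rintro x ⟨t, ht⟩
        rw [key] at ht
        rcases ht with ⟨_, h6, _⟩ | ⟨h6, _⟩
        · exact h2 x ⟨t, h6⟩
        · exact absurd ⟨x, t, h6⟩ hnc
      · refine ⟨y, j, (key _ _ _).2 (Or.inr ⟨h1, fun h => hyu h.1⟩), ?_⟩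
        rintro x ⟨t, ht⟩
        rw [key] at ht
        rcases ht with ⟨e, _⟩ | ⟨h6, _⟩
        · exact absurd ⟨w, j, e ▸ h1⟩ hnc
        · exact h2 x ⟨t, h6⟩

lemma phi_of_OI (hf : IsForest f) (h : isOI f v) :
    IsForest (phi v f) ∧ isYL (phi v f) v ∧ phi v (phi v f) = f := by
  obtain ⟨⟨u, s, hv, ho⟩, hc⟩ := h
  have huv : u < v := hf _ _ _ hv
  have key := phi_old_iff hv hc ho
  have hgv : phi v f v = some (u, s) := by
    rw [key]; right; exact ⟨huv.ne, hv⟩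
  have hgn : ¬ hasChild (phi v f) v := by
    rintro ⟨x, t, ht⟩
    rw [key] at ht
    rcases ht with ⟨e, _⟩ | ⟨e, _⟩
    · exact huv.ne e.symm
    · exact e rfl
  have hgy : ∃ x t, phi v f x = some (u, t) ∧ v < x := by
    obtain ⟨x, t, hx⟩ := hc
    exact ⟨x, t, (key _ _ _).2 (Or.inl ⟨rfl, hx⟩), hf _ _ _ hx⟩
  refine ⟨?_, isYL_iff.2 ⟨u, s, hgv, hgn, hgy⟩, ?_⟩
  · intro x y j hx
    rw [key] at hx
    rcases hx with ⟨rfl, h1⟩ | ⟨_, h1⟩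
    · exact huv.trans (hf _ _ _ h1)
    · exact hf _ _ _ h1
  · funext x
    apply opt_ext
    intro w j
    rw [phi_young_iff hgv hgn hgy, key, key]
    constructor
    · rintro (⟨rfl, (⟨_, h1⟩ | ⟨_, h1⟩), h3⟩ | ⟨(⟨rfl, h1⟩ | ⟨_, h1⟩), h2⟩)
      · exact h1
      · exact absurd (ho x ⟨j, h1⟩) (not_le.2 h3)
      · exact absurd ⟨rfl, hf _ _ _ h1⟩ h2
      · exact h1
    · intro h1
      by_cases hw : w = v
      · subst hw
        exact Or.inl ⟨rfl, Or.inl ⟨rfl, h1⟩, hf _ _ _ h1⟩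
      · refine Or.inr ⟨Or.inr ⟨hw, h1⟩, ?_⟩
        rintro ⟨rfl, h3⟩
        exact absurd (ho x ⟨j, h1⟩) (not_le.2 h3)

def wA (f : Fin n → Option (Fin n × Fin k)) (v : Fin n) : Polynomial ℝ :=
  if f v ≠ none ∧ ¬ hasChild f v then X else 1

def wB (f : Fin n → Option (Fin n × Fin k)) (v : Fin n) : Polynomial ℝ :=
  if isOL f v then X else if isOI f v then 1 + X else if isYL f v then 0 else 1

def wS (S : Finset (Fin n)) (f : Fin n → Option (Fin n × Fin k)) : Polynomial ℝ :=
  ∏ w, if w ∈ S then wB f w else wA f w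

lemma oldNode_ne_none (h : oldNode f v) : f v ≠ none := by
  obtain ⟨y, s, h, _⟩ := h; simp [h]

lemma youngNode_iff : youngNode f v ↔ f v ≠ none ∧ ¬ oldNode f v := by
  unfold youngNode
  rcases h : f v with _ | ⟨a, b⟩ <;> simp

lemma w_congr {g : Fin n → Option (Fin n × Fin k)} (w : Fin n)
    (h1 : g w = none ↔ f w = none) (h2 : hasChild g w ↔ hasChild f w)
    (h3 : oldNode g w ↔ oldNode f w) : wA g w = wA f w ∧ wB g w = wB f w := by
  unfold wA wB isOL isOI isYL
  simp only [youngNode_iff, h1, h2, h3, ne_eq, and_self]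

lemma w_eq_of_not (h1 : ¬ isYL f v) (h2 : ¬ isOI f v) : wA f v = wB f v := by
  unfold wA wB
  rw [if_neg h2, if_neg h1]
  congr 1
  unfold isYL at h1
  unfold isOI at h2
  unfold isOL
  rw [youngNode_iff] at h1
  have := @oldNode_ne_none n k f v
  apply propext
  tauto

lemma wAB_YL (h : isYL f v) : wA f v = X ∧ wB f v = 0 := by
  have h1 : ¬ isOL f v := fun h' => h.1.2 h'.1
  have h2 : ¬ isOI f v := fun h' => h.1.2 h'.1
  have h3 := h
  unfold isYL at h3
  rw [youngNode_iff] at h3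
  unfold wA wB
  rw [if_neg h1, if_neg h2, if_pos h, if_pos ⟨h3.1.1, h3.2⟩]
  exact ⟨rfl, rfl⟩

lemma wAB_OI (h : isOI f v) : wA f v = 1 ∧ wB f v = 1 + X := by
  have h1 : ¬ isOL f v := fun h' => h'.2 h.2
  unfold wA wB
  rw [if_neg h1, if_pos h, if_neg (fun h' => h'.2 h.2)]
  exact ⟨rfl, rfl⟩

lemma wS_insert_diff {S : Finset (Fin n)} (hv : v ∉ S) :
    wS S f - wS (insert v S) f =
      (wA f v - wB f v) * ∏ w ∈ Finset.univ.erase v, (if w ∈ S then wB f w else wA f w) := by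
  unfold wS
  rw [← Finset.mul_prod_erase Finset.univ _ (Finset.mem_univ v),
    ← Finset.mul_prod_erase Finset.univ _ (Finset.mem_univ v), if_neg hv,
    if_pos (Finset.mem_insert_self _ _), sub_mul]
  congr 2
  apply Finset.prod_congr rfl
  intro w hw
  have : w ≠ v := Finset.ne_of_mem_erase hw
  simp [this]

lemma wS_pair {S : Finset (Fin n)} (hv : v ∉ S) (hf : IsForest f) (h : isYL f v) :
    (wS S f - wS (insert v S) f) + (wS S (phi v f) - wS (insert v S) (phi v f)) = 0 := by
  obtain ⟨_, h2, _, h4, h5, h6⟩ := phi_of_YL hf h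
  rw [wS_insert_diff hv, wS_insert_diff hv]
  have : ∏ w ∈ Finset.univ.erase v, (if w ∈ S then wB (phi v f) w else wA (phi v f) w) =
      ∏ w ∈ Finset.univ.erase v, (if w ∈ S then wB f w else wA f w) := by
    apply Finset.prod_congr rfl
    intro w hw
    have hw' : w ≠ v := Finset.ne_of_mem_erase hw
    have := w_congr w (h4 w) (h5 w hw') (h6 w hw')
    rw [this.1, this.2]
  rw [this, (wAB_YL h).1, (wAB_YL h).2, (wAB_OI h2).1, (wAB_OI h2).2]
  ring

lemma sum_wS_insert {S : Finset (Fin n)} (hv : v ∉ S) :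
    ∑ f ∈ FS n k, wS S f = ∑ f ∈ FS n k, wS (insert v S) f := by
  rw [← sub_eq_zero, ← Finset.sum_sub_distrib]
  have hF : ∀ f : Fin n → Option (Fin n × Fin k), f ∈ FS n k ↔ IsForest f := by
    intro f; simp [FS]
  have hother : ∀ f : Fin n → Option (Fin n × Fin k), ¬ isYL f v → ¬ isOI f v →
      wS S f - wS (insert v S) f = 0 := by
    intro f h1 h2
    rw [wS_insert_diff hv, w_eq_of_not h1 h2]; ring
  refine Finset.sum_involution
    (fun f _ => if isYL f v ∨ isOI f v then phi v f else f) ?_ ?_ ?_ ?_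
  · intro f hf
    rw [hF] at hf
    by_cases h1 : isYL f v
    · simp only [h1, true_or, if_true]; exact wS_pair hv hf h1
    · by_cases h2 : isOI f v
      · simp only [h2, or_true, if_true]
        obtain ⟨a, b, c⟩ := phi_of_OI hf h2
        have := wS_pair hv a b
        rw [c] at this
        rw [add_comm]; exact this
      · simp only [h1, h2, or_self, if_false, hother f h1 h2, add_zero]
  · intro f hf hne
    rw [hF] at hf
    by_cases h1 : isYL f v
    · simp only [h1, true_or, if_true]
      intro e
      have := (phi_of_YL hf h1).2.1
      rw [e] at this
      exact h1.2 this.2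
    · by_cases h2 : isOI f v
      · simp only [h2, or_true, if_true]
        intro e
        have := (phi_of_OI hf h2).2.1
        rw [e] at this
        exact h1 this
      · exact absurd (hother f h1 h2) hne
  · intro f hf
    rw [hF] at hf ⊢
    by_cases h1 : isYL f v
    · simp only [h1, true_or, if_true]; exact (phi_of_YL hf h1).1
    · by_cases h2 : isOI f v
      · simp only [h2, or_true, if_true]; exact (phi_of_OI hf h2).1
      · simp only [h1, h2, or_self, if_false, hf]
  · intro f hf
    rw [hF] at hf
    by_cases h1 : isYL f v
    · have := phi_of_YL hf h1
      simp only [h1, true_or, if_true, this.2.1, or_true]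
      exact this.2.2.1
    · by_cases h2 : isOI f v
      · have := phi_of_OI hf h2
        simp only [h2, or_true, if_true, this.2.1, true_or]
        exact this.2.2
      · simp only [h1, h2, or_self, if_false]

lemma sum_wS (S : Finset (Fin n)) :
    ∑ f ∈ FS n k, wS ∅ f = ∑ f ∈ FS n k, wS S f := by
  induction S using Finset.induction_on with
  | empty => rfl
  | insert v S hv ih => rw [ih, sum_wS_insert hv]

lemma wS_empty : wS ∅ f = X ^ nlStat f := by
  unfold wS wA nlStat
  simp only [Finset.notMem_empty, if_false]
  rw [Finset.prod_ite]
  simp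

lemma wS_univ : wS Finset.univ f =
    if NoYoungLeaf f then X ^ oleafStat f * (1 + X) ^ ointStat f else 0 := by
  unfold wS
  simp only [Finset.mem_univ, if_true]
  split_ifs with h
  · have : ∀ w, wB f w = (if isOL f w then X else 1) * (if isOI f w then 1 + X else 1) := by
      intro w
      unfold wB
      have h1 : ¬ isYL f w := h w
      rw [if_neg h1]
      split_ifs with h2 h3
      · exact absurd h3.2 h2.2
      all_goals simp
    simp only [this, Finset.prod_mul_distrib]
    rw [Finset.prod_ite, Finset.prod_ite]
    simp only [Finset.prod_const, one_pow, mul_one]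
    unfold isOL isOI oleafStat ointStat
    congr
  · unfold NoYoungLeaf at h
    push Not at h
    obtain ⟨v, h⟩ := h
    exact Finset.prod_eq_zero (Finset.mem_univ v) (wAB_YL h).2

def NYS (n k : ℕ) : Finset (Fin n → Option (Fin n × Fin k)) :=
  (FS n k).filter NoYoungLeaf

lemma Apoly_eq_NY : Apoly k n = ∑ f ∈ NYS n k, X ^ oleafStat f * (1 + X) ^ ointStat f := by
  rw [Apoly_eq_Fpoly]
  unfold Fpoly NYS
  simp only [← wS_empty]
  rw [sum_wS Finset.univ, Finset.sum_filter]
  simp only [wS_univ]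

end FS

/-! ### Part 3: merging and splitting trees -/

section Merge
variable {n k : ℕ}

def mg (l : Fin k) (r m : Fin n) (f : Fin n → Option (Fin n × Fin k)) :
    Fin n → Option (Fin n × Fin k) :=
  fun x => if f x = none ∧ r < x ∧ x ≤ m then some (r, l) else f x

def sp (r : Fin n) (f : Fin n → Option (Fin n × Fin k)) :
    Fin n → Option (Fin n × Fin k) :=
  fun x => if ∃ t, f x = some (r, t) then none else f x

structure MgOk (f : Fin n → Option (Fin n × Fin k)) (r m : Fin n) : Prop where
  forest : IsForest f
  root_r : f r = none
  leaf_r : ¬ hasChild f r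
  root_m : f m = none
  lt : r < m

structure SpOk (l : Fin k) (g : Fin n → Option (Fin n × Fin k)) (r m : Fin n) : Prop where
  forest : IsForest g
  root_r : g r = none
  child_m : ∃ t, g m = some (r, t)
  max_m : ∀ x t, g x = some (r, t) → x ≤ m
  slot : ∀ x t, g x = some (r, t) → t = l
  later : ∀ x, g x = none → r < x → m < x

variable {l : Fin k} {f g : Fin n → Option (Fin n × Fin k)} {r m u : Fin n}

lemma mg_some (x w : Fin n) (j : Fin k) : mg l r m f x = some (w, j) ↔
    (w = r ∧ j = l ∧ f x = none ∧ r < x ∧ x ≤ m) ∨ f x = some (w, j) := by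
  unfold mg
  split_ifs with h
  · simp [h, eq_comm]
  · constructor
    · exact Or.inr
    · rintro (h1 | h1)
      · exact absurd h1.2.2 h
      · exact h1

lemma mg_none (x : Fin n) : mg l r m f x = none ↔ f x = none ∧ ¬ (r < x ∧ x ≤ m) := by
  unfold mg
  split_ifs with h
  · simp; tauto
  · tauto

lemma sp_some (x w : Fin n) (j : Fin k) : sp r g x = some (w, j) ↔
    g x = some (w, j) ∧ w ≠ r := by
  unfold sp
  split_ifs with h
  · obtain ⟨t, h⟩ := h
    simp [h]; tauto
  · constructor
    · intro h1; exact ⟨h1, fun e => h ⟨j, e ▸ h1⟩⟩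
    · exact And.left

lemma sp_none (x : Fin n) : sp r g x = none ↔ g x = none ∨ ∃ t, g x = some (r, t) := by
  unfold sp
  split_ifs with h
  · simp [h]
  · tauto

lemma MgOk.root_mg (h : MgOk f r m) : mg l r m f r = none := by
  rw [mg_none]; exact ⟨h.root_r, fun h => lt_irrefl _ h.1⟩

lemma MgOk.mg_m (h : MgOk f r m) : mg l r m f m = some (r, l) := by
  rw [mg_some]; exact Or.inl ⟨rfl, rfl, h.root_m, h.lt, le_rfl⟩

lemma MgOk.isForest (h : MgOk f r m) : IsForest (mg l r m f) := by
  intro x y s hx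
  rw [mg_some] at hx
  rcases hx with ⟨rfl, _, _, h1, _⟩ | h1
  · exact h1
  · exact h.forest _ _ _ h1

lemma MgOk.hasChild (h : MgOk f r m) (w : Fin n) :
    hasChild (mg l r m f) w ↔ hasChild f w ∨ w = r := by
  constructor
  · rintro ⟨x, s, hx⟩
    rw [mg_some] at hx
    rcases hx with ⟨h1, _⟩ | h1
    · exact Or.inr h1
    · exact Or.inl ⟨x, s, h1⟩
  · rintro (⟨x, s, h1⟩ | rfl)
    · exact ⟨x, s, (mg_some _ _ _).2 (Or.inr h1)⟩
    · exact ⟨m, l, h.mg_m⟩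

lemma MgOk.child_r (h : MgOk f r m) (x : Fin n) (t : Fin k) :
    mg l r m f x = some (r, t) ↔ t = l ∧ f x = none ∧ r < x ∧ x ≤ m := by
  rw [mg_some]
  constructor
  · rintro (h1 | h1)
    · exact h1.2
    · exact absurd ⟨x, t, h1⟩ h.leaf_r
  · intro h1; exact Or.inl ⟨rfl, h1⟩

lemma MgOk.child_ne (w : Fin n) (hw : w ≠ r) (x : Fin n) (t : Fin k) :
    mg l r m f x = some (w, t) ↔ f x = some (w, t) := by
  rw [mg_some]; simp [hw]

lemma MgOk.oldNode (h : MgOk f r m) (w : Fin n) :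
    oldNode (mg l r m f) w ↔ oldNode f w ∨ w = m := by
  constructor
  · rintro ⟨y, s, h1, h2⟩
    by_cases hy : y = r
    · subst hy
      rw [h.child_r] at h1
      right
      exact le_antisymm h1.2.2.2 (h2 m ⟨l, h.mg_m⟩)
    · left
      simp only [MgOk.child_ne y hy] at h1 h2
      exact ⟨y, s, h1, h2⟩
  · rintro (⟨y, s, h1, h2⟩ | rfl)
    · have hy : y ≠ r := by rintro rfl; exact h.leaf_r ⟨w, s, h1⟩
      refine ⟨y, s, ?_, ?_⟩
      · rw [MgOk.child_ne y hy]; exact h1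
      · simpa only [MgOk.child_ne y hy] using h2
    · refine ⟨r, l, h.mg_m, ?_⟩
      rintro x ⟨t, hx⟩
      rw [h.child_r] at hx
      exact hx.2.2.2

lemma MgOk.sp_mg (h : MgOk f r m) : sp r (mg l r m f) = f := by
  funext x
  apply opt_ext
  intro w j
  rw [sp_some]
  constructor
  · rintro ⟨h1, h2⟩
    rwa [MgOk.child_ne w h2] at h1
  · intro h1
    have hw : w ≠ r := by rintro rfl; exact h.leaf_r ⟨x, j, h1⟩
    exact ⟨(MgOk.child_ne w hw _ _).2 h1, hw⟩

lemma SpOk.mgOk (h : SpOk l g r m) : MgOk (sp r g) r m where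
  forest := by
    intro x y s hx
    rw [sp_some] at hx
    exact h.forest _ _ _ hx.1
  root_r := by rw [sp_none]; exact Or.inl h.root_r
  leaf_r := by
    rintro ⟨x, s, hx⟩
    rw [sp_some] at hx
    exact hx.2 rfl
  root_m := by rw [sp_none]; exact Or.inr h.child_m
  lt := by obtain ⟨t, ht⟩ := h.child_m; exact h.forest _ _ _ ht

lemma SpOk.mg_sp (h : SpOk l g r m) : mg l r m (sp r g) = g := by
  funext x
  apply opt_ext
  intro w j
  by_cases hw : w = r
  · subst hw
    rw [h.mgOk.child_r, sp_none]
    constructor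
    · rintro ⟨rfl, (h1 | ⟨t, h1⟩), h2, h3⟩
      · exact absurd (h.later x h1 h2) (not_lt.2 h3)
      · rw [h1, h.slot x t h1]
    · intro h1
      exact ⟨h.slot _ _ h1, Or.inr ⟨j, h1⟩, h.forest _ _ _ h1, h.max_m _ _ h1⟩
  · rw [MgOk.child_ne w hw, sp_some]
    simp [hw]

lemma MgOk.ny (h : MgOk f r m) : NoYoungLeaf (mg l r m f) ↔
    NoYoungLeaf f ∧ ∀ w, f w = none → r < w → w < m → _root_.hasChild f w := by
  unfold NoYoungLeaf
  simp only [youngNode_iff, h.hasChild, h.oldNode, ne_eq, mg_none]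
  constructor
  · intro h1
    refine ⟨fun w hw => ?_, fun w hw h2 h3 => ?_⟩
    · refine h1 w ⟨⟨?_, ?_⟩, ?_⟩
      · exact fun h2 => hw.1.1 h2.1
      · rintro (h2 | h2)
        · exact hw.1.2 h2
        · exact hw.1.1 (h2 ▸ h.root_m)
      · rintro (h2 | h2)
        · exact hw.2 h2
        · exact hw.1.1 (h2 ▸ h.root_r)
    · by_contra hc
      refine h1 w ⟨⟨fun h4 => h4.2 ⟨h2, h3.le⟩, ?_⟩, ?_⟩
      · rintro (h4 | h4)
        · exact oldNode_ne_none h4 hw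
        · exact h3.ne h4
      · rintro (h4 | h4)
        · exact hc h4
        · exact h2.ne h4.symm
  · rintro ⟨h1, h2⟩ w ⟨⟨h3, h4⟩, h5⟩
    push Not at h4 h5
    by_cases hw : f w = none
    · have : r < w ∧ w ≤ m := by by_contra h6; exact h3 ⟨hw, h6⟩
      exact h5.1 (h2 w hw this.1 (lt_of_le_of_ne this.2 h4.2))
    · exact h1 w ⟨⟨hw, h4.1⟩, h5.1⟩

lemma MgOk.bar (h : MgOk f r m) (hr : ∃ ρ, f ρ = none ∧ m < ρ) :
    inBarClass (mg l r m f) ↔ inBarClass f := by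
  obtain ⟨ρ, hρ, hmρ⟩ := hr
  have hρg : mg l r m f ρ = none := (mg_none _).2 ⟨hρ, fun h => absurd hmρ (not_lt.2 h.2)⟩
  constructor
  · rintro ⟨q, h1, h2, h3⟩
    have hq : m < q := lt_of_lt_of_le hmρ (h2 ρ hρg)
    have hqr : q ≠ r := (h.lt.trans hq).ne'
    refine ⟨q, ((mg_none _).1 h1).1, ?_, ?_⟩
    · intro x hx
      by_cases hxm : r < x ∧ x ≤ m
      · exact hxm.2.trans hq.le
      · exact h2 x ((mg_none _).2 ⟨hx, hxm⟩)
    · rw [h.hasChild] at h3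
      simp only [ne_eq, MgOk.child_ne q hqr, hqr, or_false] at h3
      exact h3
  · rintro ⟨q, h1, h2, h3⟩
    have hq : m < q := lt_of_lt_of_le hmρ (h2 ρ hρ)
    have hqr : q ≠ r := (h.lt.trans hq).ne'
    refine ⟨q, (mg_none _).2 ⟨h1, fun h => absurd hq (not_lt.2 h.2)⟩, ?_, ?_⟩
    · intro x hx
      exact h2 x ((mg_none _).1 hx).1
    · rw [h.hasChild]
      simp only [ne_eq, MgOk.child_ne q hqr, hqr, or_false]
      exact h3

lemma MgOk.rem (h : MgOk f r m) (hm : ¬ _root_.hasChild f m) (hu : m < u) :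
    removableOldLeaf (mg l r m f) u ↔ removableOldLeaf f u := by
  have hru : u ≠ r := (h.lt.trans hu).ne'
  constructor
  · rintro ⟨h1, h2, q, s, h3, h4, h5, h6, h7⟩
    have hqr : q ≠ r := by
      rintro rfl
      rw [h.child_r] at h3
      exact absurd hu (not_lt.2 h3.2.2.2)
    have hmq : m < q := by
      by_contra hc
      have hqm : ¬ r < q := fun h' => ((mg_none _).1 h4).2 ⟨h', not_lt.1 hc⟩
      have : u < r := h7 r h.root_mg (lt_of_le_of_ne (not_lt.1 hqm) hqr)
      exact lt_irrefl _ (this.trans (h.lt.trans hu))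
    rw [h.oldNode] at h1
    rw [h.hasChild] at h2
    simp only [MgOk.child_ne q hqr, h.hasChild, ne_eq] at h3 h5 h6
    refine ⟨h1.resolve_right hu.ne', fun h' => h2 (Or.inl h'), q, s, h3,
      ((mg_none _).1 h4).1, ?_, h6, ?_⟩
    · rintro x ⟨t, hx⟩ hxu
      rcases h5 x ⟨t, hx⟩ hxu with h' | rfl
      · exact h'
      · rw [h.root_r] at hx; cases hx
    · intro x hx hqx
      exact h7 x ((mg_none _).2 ⟨hx, fun h' => absurd (hmq.trans hqx) (not_lt.2 h'.2)⟩) hqx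
  · rintro ⟨h1, h2, q, s, h3, h4, h5, h6, h7⟩
    have hqr : q ≠ r := by rintro rfl; exact h.leaf_r ⟨u, s, h3⟩
    have hqm : q ≠ m := by rintro rfl; exact hm ⟨u, s, h3⟩
    have hmq : m < q := by
      by_contra hc
      have := h7 m h.root_m (lt_of_le_of_ne (not_lt.1 hc) hqm)
      exact lt_irrefl _ (this.trans hu)
    refine ⟨(h.oldNode _).2 (Or.inl h1), ?_, q, s, (MgOk.child_ne q hqr _ _).2 h3,
      (mg_none _).2 ⟨h4, fun h' => absurd hmq (not_lt.2 h'.2)⟩, ?_, ?_, ?_⟩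
    · rw [h.hasChild]; tauto
    · simp only [MgOk.child_ne q hqr, h.hasChild]
      exact fun x hx hxu => Or.inl (h5 x hx hxu)
    · simpa only [MgOk.child_ne q hqr, ne_eq] using h6
    · intro x hx hqx
      exact h7 x ((mg_none _).1 hx).1 hqx

/-- the counting identity -/
lemma card_old_eq (hn : NoYoungLeaf f) :
    n = 2 * oleafStat f + ointStat f + siStat f := by
  -- old nodes correspond to internal nodes
  have e1 : (Finset.univ.filter fun v => oldNode f v).card =
      (Finset.univ.filter fun v => hasChild f v).card := by
    refine Finset.card_bij
      (fun v hv => (Finset.mem_filter.1 hv).2.choose) ?_ ?_ ?_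
    · intro v hv
      obtain ⟨s, h1, h2⟩ := (Finset.mem_filter.1 hv).2.choose_spec
      simp only [Finset.mem_filter, Finset.mem_univ, true_and]
      exact ⟨v, s, h1⟩
    · intro v hv v' hv' e
      obtain ⟨s, h1, h2⟩ := (Finset.mem_filter.1 hv).2.choose_spec
      obtain ⟨s', h1', h2'⟩ := (Finset.mem_filter.1 hv').2.choose_spec
      rw [← e] at h1' h2'
      exact le_antisymm (h2' v ⟨s, h1⟩) (h2 v' ⟨s', h1'⟩)
    · intro y hy
      have hy' := (Finset.mem_filter.1 hy).2
      obtain ⟨x, t, hx⟩ := hy'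
      obtain ⟨v, hv, hmax⟩ := Finset.exists_max_image
        (Finset.univ.filter fun x => ∃ t, f x = some (y, t)) id ⟨x, by simp; exact ⟨t, hx⟩⟩
      simp only [Finset.mem_filter, Finset.mem_univ, true_and, id] at hv hmax
      obtain ⟨s, hs⟩ := hv
      have hold : oldNode f v := ⟨y, s, hs, hmax⟩
      refine ⟨v, by simpa using hold, ?_⟩
      obtain ⟨s', h1, h2⟩ := hold.choose_spec
      exact congrArg Prod.fst (Option.some.inj (h1.symm.trans hs))
  have e2 : (Finset.univ.filter fun v => oldNode f v).card = ointStat f + oleafStat f := by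
    rw [← Finset.card_filter_add_card_filter_not (fun v => hasChild f v),
      Finset.filter_filter, Finset.filter_filter]
    rfl
  have e3 : (Finset.univ.filter fun v => ¬ hasChild f v).card = siStat f + oleafStat f := by
    rw [← Finset.card_filter_add_card_filter_not (fun v => f v = none),
      Finset.filter_filter, Finset.filter_filter]
    unfold siStat oleafStat
    congr 2
    · ext v; simp; tauto
    · ext v
      simp only [Finset.mem_filter, Finset.mem_univ, true_and]
      have := hn v
      rw [youngNode_iff] at this
      have h2 := @oldNode_ne_none n k f v
      tauto
  have e4 := Finset.card_filter_add_card_filter_not (s := (Finset.univ : Finset (Fin n)))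
    (fun v => hasChild f v)
  rw [Finset.card_univ, Fintype.card_fin] at e4
  omega

end Merge

section Steps
variable {n k : ℕ}

/-- `v` is a singleton component. -/
def RL (f : Fin n → Option (Fin n × Fin k)) (v : Fin n) : Prop := f v = none ∧ ¬ hasChild f v

/-- there is a root with label larger than `v` -/
def LR (f : Fin n → Option (Fin n × Fin k)) (v : Fin n) : Prop := ∃ ρ, f ρ = none ∧ v < ρ

def j0S (t : ℕ) (f : Fin n → Option (Fin n × Fin k)) : Finset (Fin n) :=
  Finset.univ.filter fun v => RL f v ∧ ((v : ℕ) < t ∧ LR f v)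

def j1S (t : ℕ) (f : Fin n → Option (Fin n × Fin k)) : Finset (Fin n) :=
  Finset.univ.filter fun v => RL f v ∧ ¬ ((v : ℕ) < t ∧ LR f v)

def brk (m : ℕ) : Polynomial ℝ := ∑ i ∈ Finset.range m, X ^ i

lemma brk_rec (j : ℕ) : (1 + X) * brk (j + 1) - brk (j + 2) = X * brk j := by
  have h1 : brk (j + 2) = X * brk (j + 1) + 1 := by
    unfold brk; rw [Finset.sum_range_succ', Finset.mul_sum]; simp [pow_succ']
  have h2 : brk (j + 1) = X * brk j + 1 := by
    unfold brk; rw [Finset.sum_range_succ', Finset.mul_sum]; simp [pow_succ']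
  rw [h1]; linear_combination h2

def wt (t : ℕ) (f : Fin n → Option (Fin n × Fin k)) : Polynomial ℝ :=
  X ^ oleafStat f * (1 + X) ^ (ointStat f + (j1S t f).card) * brk ((j0S t f).card + 1)

def CS (n k t : ℕ) : Finset (Fin n → Option (Fin n × Fin k)) :=
  (NYS n k).filter fun f => inBarClass f ∧ ∀ u : Fin n, removableOldLeaf f u → (u : ℕ) < t ∧ LR f u

lemma mem_NYS (f : Fin n → Option (Fin n × Fin k)) :
    f ∈ NYS n k ↔ IsForest f ∧ NoYoungLeaf f := by simp [NYS, FS]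

lemma mem_CS (t : ℕ) (f : Fin n → Option (Fin n × Fin k)) :
    f ∈ CS n k t ↔ IsForest f ∧ NoYoungLeaf f ∧ inBarClass f ∧
      ∀ u : Fin n, removableOldLeaf f u → (u : ℕ) < t ∧ LR f u := by
  simp [CS, mem_NYS, and_assoc]

variable {f g : Fin n → Option (Fin n × Fin k)} {r m u : Fin n} {l : Fin k}

lemma MgOk.oleaf_leaf (h : MgOk f r m) (hm : ¬ _root_.hasChild f m) :
    oleafStat (mg l r m f) = oleafStat f + 1 := by
  have h1 : (Finset.univ.filter fun v => _root_.oldNode (mg l r m f) v ∧ ¬ _root_.hasChild (mg l r m f) v)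
      = insert m (Finset.univ.filter fun v => _root_.oldNode f v ∧ ¬ _root_.hasChild f v) := by
    ext v
    simp only [Finset.mem_filter, Finset.mem_univ, true_and, Finset.mem_insert, h.oldNode,
      h.hasChild]
    constructor
    · rintro ⟨h1 | h1, h2⟩
      · right; exact ⟨h1, fun h' => h2 (Or.inl h')⟩
      · left; exact h1
    · rintro (rfl | ⟨h1, h2⟩)
      · exact ⟨Or.inr rfl, fun h' => h'.elim hm (fun e => h.lt.ne' e)⟩
      · refine ⟨Or.inl h1, fun h' => h'.elim h2 (fun e => oldNode_ne_none h1 (e ▸ h.root_r))⟩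
  unfold oleafStat
  rw [h1, Finset.card_insert_of_notMem]
  simp only [Finset.mem_filter, Finset.mem_univ, true_and, not_and]
  intro h2
  exact absurd h.root_m (oldNode_ne_none h2)

lemma MgOk.oint_leaf (h : MgOk f r m) (hm : ¬ _root_.hasChild f m) :
    ointStat (mg l r m f) = ointStat f := by
  unfold ointStat
  congr 1
  ext v
  simp only [Finset.mem_filter, Finset.mem_univ, true_and, h.oldNode, h.hasChild]
  constructor
  · rintro ⟨h1 | rfl, h2 | rfl⟩
    · exact ⟨h1, h2⟩
    · exact absurd h.root_r (oldNode_ne_none h1)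
    · exact absurd h2 hm
    · exact absurd h.lt (lt_irrefl _)
  · rintro ⟨h1, h2⟩; exact ⟨Or.inl h1, Or.inl h2⟩

lemma MgOk.oleaf_int (h : MgOk f r m) (hm : _root_.hasChild f m) :
    oleafStat (mg l r m f) = oleafStat f := by
  unfold oleafStat
  congr 1
  ext v
  simp only [Finset.mem_filter, Finset.mem_univ, true_and, h.oldNode, h.hasChild]
  constructor
  · rintro ⟨h1 | rfl, h2⟩
    · exact ⟨h1, fun h' => h2 (Or.inl h')⟩
    · exact absurd (Or.inl hm) h2
  · rintro ⟨h1, h2⟩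
    exact ⟨Or.inl h1, fun h' => h'.elim h2 (fun e => oldNode_ne_none h1 (e ▸ h.root_r))⟩

lemma MgOk.oint_int (h : MgOk f r m) (hm : _root_.hasChild f m) :
    ointStat (mg l r m f) = ointStat f + 1 := by
  have h1 : (Finset.univ.filter fun v => _root_.oldNode (mg l r m f) v ∧ _root_.hasChild (mg l r m f) v)
      = insert m (Finset.univ.filter fun v => _root_.oldNode f v ∧ _root_.hasChild f v) := by
    ext v
    simp only [Finset.mem_filter, Finset.mem_univ, true_and, Finset.mem_insert, h.oldNode,
      h.hasChild]
    constructor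
    · rintro ⟨h1 | h1, h2⟩
      · right
        exact ⟨h1, h2.resolve_right (fun e => oldNode_ne_none h1 (e ▸ h.root_r))⟩
      · left; exact h1
    · rintro (rfl | ⟨h1, h2⟩)
      · exact ⟨Or.inr rfl, Or.inl hm⟩
      · exact ⟨Or.inl h1, Or.inl h2⟩
  unfold ointStat
  rw [h1, Finset.card_insert_of_notMem]
  simp only [Finset.mem_filter, Finset.mem_univ, true_and, not_and]
  intro h2
  exact absurd h.root_m (oldNode_ne_none h2)

/-- conditions on `f` under which `r, u` can be merged -/
structure Op1 (f : Fin n → Option (Fin n × Fin k)) (u r : Fin n) : Prop where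
  root : f r = none
  leaf : ¬ hasChild f r
  lt : r < u
  between : ∀ w, f w = none → r < w → w < u → hasChild f w

lemma Op1.unique {r' : Fin n} (h : Op1 f u r) (h' : Op1 f u r') : r = r' := by
  rcases lt_trichotomy r r' with h1 | h1 | h1
  · exact absurd (h.between r' h'.root h1 h'.lt) h'.leaf
  · exact h1
  · exact absurd (h'.between r h.root h1 h.lt) h.leaf

lemma Op1.mgOk (h : Op1 f u r) (hf : IsForest f) (hu : f u = none) : MgOk f r u :=
  ⟨hf, h.root, h.leaf, hu, h.lt⟩

lemma exists_Op1 (hr : ∃ r, RL f r ∧ r < u) : ∃ r, Op1 f u r := by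
  obtain ⟨r0, hr0⟩ := hr
  obtain ⟨r, hr, hmax⟩ := Finset.exists_max_image
    (Finset.univ.filter fun r => RL f r ∧ r < u) id ⟨r0, by simpa using hr0⟩
  simp only [Finset.mem_filter, Finset.mem_univ, true_and, id] at hr hmax
  refine ⟨r, hr.1.1, hr.1.2, hr.2, fun w h1 h2 h3 => ?_⟩
  by_contra h4
  exact absurd (hmax w ⟨⟨h1, h4⟩, h3⟩) (not_le.2 h2)

lemma op1_wt (h : MgOk f r u) (ho : Op1 f u r) (hu : ¬ hasChild f u) (hl : LR f u) :
    wt ((u : ℕ) + 1) (mg l r u f) = wt (u : ℕ) f - wt ((u : ℕ) + 1) f := by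
  obtain ⟨ρ, hρ, huρ⟩ := hl
  have hLR : ∀ v, v ≤ u → LR f v := fun v hv => ⟨ρ, hρ, lt_of_le_of_lt hv huρ⟩
  have hLRg : ∀ v, v ≤ u → LR (mg l r u f) v := fun v hv =>
    ⟨ρ, (mg_none _).2 ⟨hρ, fun h => absurd huρ (not_lt.2 h.2)⟩, lt_of_le_of_lt hv huρ⟩
  have e0 : j0S ((u : ℕ) + 1) f = insert u (j0S (u : ℕ) f) := by
    ext v
    simp only [j0S, Finset.mem_filter, Finset.mem_univ, true_and, Finset.mem_insert]
    constructor
    · rintro ⟨h1, h2, h3⟩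
      by_cases hv : v = u
      · exact Or.inl hv
      · right; refine ⟨h1, ?_, h3⟩
        have : (v : ℕ) ≠ u := fun e => hv (Fin.ext e)
        omega
    · rintro (rfl | ⟨h1, h2, h3⟩)
      · exact ⟨⟨h.root_m, hu⟩, by omega, hLR _ le_rfl⟩
      · exact ⟨h1, by omega, h3⟩
  have c0 : (j0S ((u : ℕ) + 1) f).card = (j0S (u : ℕ) f).card + 1 := by
    rw [e0, Finset.card_insert_of_notMem]
    simp [j0S]
  have e1 : j1S (u : ℕ) f = insert u (j1S ((u : ℕ) + 1) f) := by
    ext v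
    simp only [j1S, Finset.mem_filter, Finset.mem_univ, true_and, Finset.mem_insert]
    constructor
    · rintro ⟨h1, h2⟩
      by_cases hv : v = u
      · exact Or.inl hv
      · right; refine ⟨h1, fun h3 => h2 ⟨?_, h3.2⟩⟩
        have : (v : ℕ) ≠ u := fun e => hv (Fin.ext e)
        omega
    · rintro (rfl | ⟨h1, h2⟩)
      · exact ⟨⟨h.root_m, hu⟩, by omega⟩
      · exact ⟨h1, fun h3 => h2 ⟨by omega, h3.2⟩⟩
  have c1 : (j1S (u : ℕ) f).card = (j1S ((u : ℕ) + 1) f).card + 1 := by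
    rw [e1, Finset.card_insert_of_notMem]
    simp only [j1S, Finset.mem_filter, Finset.mem_univ, true_and, not_and]
    exact fun _ h' => h' (by omega) (hLR _ le_rfl)
  have hRL : ∀ v, RL (mg l r u f) v ↔ RL f v ∧ v ≠ r ∧ v ≠ u := by
    intro v
    unfold RL
    rw [mg_none, h.hasChild]
    constructor
    · rintro ⟨⟨h1, h2⟩, h3⟩
      push Not at h3
      exact ⟨⟨h1, h3.1⟩, h3.2, by rintro rfl; exact h2 ⟨h.lt, le_rfl⟩⟩
    · rintro ⟨⟨h1, h2⟩, h3, h4⟩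
      refine ⟨⟨h1, fun h5 => h2 (ho.between v h1 h5.1 (lt_of_le_of_ne h5.2 h4))⟩, ?_⟩
      tauto
  have e2 : j0S ((u : ℕ) + 1) (mg l r u f) = (j0S (u : ℕ) f).erase r := by
    ext v
    simp only [j0S, Finset.mem_filter, Finset.mem_univ, true_and, Finset.mem_erase, hRL]
    constructor
    · rintro ⟨⟨h1, h2, h4⟩, h3, _⟩
      have : (v : ℕ) ≠ u := fun e => h4 (Fin.ext e)
      exact ⟨h2, h1, by omega, hLR v (by rw [Fin.le_def]; omega)⟩
    · rintro ⟨h1, h2, h3, _⟩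
      exact ⟨⟨h2, h1, by rintro rfl; omega⟩, by omega, hLRg v (by rw [Fin.le_def]; omega)⟩
  have c2 : (j0S ((u : ℕ) + 1) (mg l r u f)).card + 1 = (j0S (u : ℕ) f).card := by
    rw [e2, Finset.card_erase_add_one]
    simp only [j0S, Finset.mem_filter, Finset.mem_univ, true_and]
    exact ⟨⟨h.root_r, h.leaf_r⟩, h.lt, hLR r h.lt.le⟩
  have e3 : j1S ((u : ℕ) + 1) (mg l r u f) = j1S ((u : ℕ) + 1) f := by
    ext v
    simp only [j1S, Finset.mem_filter, Finset.mem_univ, true_and, hRL]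
    by_cases hv : v ≤ u
    · have hv' : (v : ℕ) < u + 1 := by rw [Fin.le_def] at hv; omega
      simp [hv', hLR v hv, hLRg v hv]
    · have hv' : ¬ (v : ℕ) < u + 1 := by rw [Fin.le_def] at hv; omega
      have h1 : v ≠ u := by rintro rfl; exact hv le_rfl
      have h2 : v ≠ r := by rintro rfl; exact hv h.lt.le
      simp [hv', h1, h2]
  unfold wt
  rw [h.oleaf_leaf hu, h.oint_leaf hu, e3, c0, c1, c2]
  have := brk_rec (j0S (u : ℕ) f).card
  linear_combination (-(X ^ oleafStat f * (1 + X) ^ (ointStat f + (j1S (↑u + 1) f).card))) * this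

lemma wt_eq_of_not (h : ¬ (RL f u ∧ LR f u ∧ ∃ r, RL f r ∧ r < u)) :
    wt (u : ℕ) f = wt ((u : ℕ) + 1) f := by
  by_cases h1 : RL f u ∧ LR f u
  · -- no singleton before `u`
    have hno : ∀ r, RL f r → ¬ r < u := fun r h2 h3 => h ⟨h1.1, h1.2, r, h2, h3⟩
    have e0 : j0S (u : ℕ) f = ∅ := by
      ext v
      simp only [j0S, Finset.mem_filter, Finset.mem_univ, true_and, Finset.notMem_empty, iff_false]
      rintro ⟨h2, h3, _⟩
      exact hno v h2 h3
    have e0' : j0S ((u : ℕ) + 1) f = {u} := by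
      ext v
      simp only [j0S, Finset.mem_filter, Finset.mem_univ, true_and, Finset.mem_singleton]
      constructor
      · rintro ⟨h2, h3, _⟩
        have := hno v h2
        rw [Fin.lt_def] at this
        exact Fin.ext (by omega)
      · rintro rfl; exact ⟨h1.1, by omega, h1.2⟩
    have e1 : j1S (u : ℕ) f = insert u (j1S ((u : ℕ) + 1) f) := by
      ext v
      simp only [j1S, Finset.mem_filter, Finset.mem_univ, true_and, Finset.mem_insert]
      constructor
      · rintro ⟨h1, h2⟩
        by_cases hv : v = u
        · exact Or.inl hv
        · right; refine ⟨h1, fun h3 => h2 ⟨?_, h3.2⟩⟩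
          have : (v : ℕ) ≠ u := fun e => hv (Fin.ext e)
          omega
      · rintro (rfl | ⟨h1, h2⟩)
        · exact ⟨h1.1, by omega⟩
        · exact ⟨h1, fun h3 => h2 ⟨by omega, h3.2⟩⟩
    have c1 : (j1S (u : ℕ) f).card = (j1S ((u : ℕ) + 1) f).card + 1 := by
      rw [e1, Finset.card_insert_of_notMem]
      simp only [j1S, Finset.mem_filter, Finset.mem_univ, true_and, not_and]
      exact fun _ h' => h' (by omega) h1.2
    unfold wt
    rw [e0, e0', c1]
    simp [brk, Finset.sum_range_succ]
    ring
  · have key : ∀ v : Fin n, RL f v → (((v : ℕ) < u ∧ LR f v) ↔ ((v : ℕ) < u + 1 ∧ LR f v)) := by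
      intro v hv
      constructor
      · rintro ⟨a, b⟩; exact ⟨by omega, b⟩
      · rintro ⟨a, b⟩
        refine ⟨?_, b⟩
        by_contra hc
        have : v = u := Fin.ext (by omega)
        subst this
        exact h1 ⟨hv, b⟩
    have e0 : j0S (u : ℕ) f = j0S ((u : ℕ) + 1) f := by
      ext v
      simp only [j0S, Finset.mem_filter, Finset.mem_univ, true_and]
      exact and_congr_right (key v)
    have e1 : j1S (u : ℕ) f = j1S ((u : ℕ) + 1) f := by
      ext v
      simp only [j1S, Finset.mem_filter, Finset.mem_univ, true_and]
      exact and_congr_right fun hv => not_congr (key v hv)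
    unfold wt
    rw [e0, e1]

lemma op1_forward (hl : (l : ℕ) = k - 1) (hf : f ∈ CS n k u) (hu : RL f u) (hL : LR f u)
    (ho : Op1 f u r) :
    mg l r u f ∈ CS n k (u + 1) ∧ removableOldLeaf (mg l r u f) u := by
  rw [mem_CS] at hf ⊢
  obtain ⟨h1, h2, h3, h4⟩ := hf
  have h := ho.mgOk h1 hu.1
  refine ⟨⟨h.isForest, h.ny.2 ⟨h2, ho.between⟩, (h.bar hL).2 h3, ?_⟩, ?_⟩
  · intro u' hu'
    obtain ⟨ρ, hρ, huρ⟩ := hL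
    by_cases hc : u < u'
    · rw [h.rem hu.2 hc] at hu'
      have := (h4 u' hu').1
      rw [Fin.lt_def] at hc
      omega
    · refine ⟨?_, ρ, (mg_none _).2 ⟨hρ, fun h => absurd huρ (not_lt.2 h.2)⟩,
        lt_of_le_of_lt (not_lt.1 hc) huρ⟩
      rw [Fin.lt_def] at hc; omega
  · refine ⟨(h.oldNode _).2 (Or.inr rfl), ?_, r, l, h.mg_m, h.root_mg, ?_, ?_, ?_⟩
    · rw [h.hasChild]
      exact fun h' => h'.elim hu.2 (fun e => h.lt.ne' e)
    · rintro x ⟨t, hx⟩ hxu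
      rw [h.child_r] at hx
      rw [h.hasChild]
      exact Or.inl (ho.between x hx.2.1 hx.2.2.1 (lt_of_le_of_ne hx.2.2.2 hxu))
    · intro x j hj hx
      rw [h.child_r] at hx
      rw [hx.1] at hj
      omega
    · intro x hx hrx
      rw [mg_none] at hx
      by_contra hc
      exact hx.2 ⟨hrx, not_lt.1 hc⟩

lemma op1_backward (hl : (l : ℕ) = k - 1) (hg : g ∈ CS n k (u + 1)) (hu : removableOldLeaf g u) :
    ∃ r, SpOk l g r u ∧ sp r g ∈ CS n k u ∧ RL (sp r g) u ∧ LR (sp r g) u ∧ Op1 (sp r g) u r := by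
  rw [mem_CS] at hg
  obtain ⟨h1, h2, h3, h4⟩ := hg
  have hL := (h4 u hu).2
  obtain ⟨hold, hleaf, r, s, hs, hr, hsib, hslot, hlater⟩ := hu
  have hS : SpOk l g r u := by
    refine ⟨h1, hr, ⟨s, hs⟩, ?_, ?_, hlater⟩
    · intro x t hx
      obtain ⟨y, s', h5, h6⟩ := hold
      rw [hs] at h5
      simp only [Option.some.injEq, Prod.mk.injEq] at h5
      exact h6 x ⟨t, h5.1 ▸ hx⟩
    · intro x t hx
      by_contra hc
      refine hslot x t ?_ hx
      have : (t : ℕ) ≠ l := fun e => hc (Fin.ext e)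
      have := t.2
      omega
  have h := hS.mgOk
  have e : mg l r u (sp r g) = g := hS.mg_sp
  have hleaf' : ¬ hasChild (sp r g) u := by
    intro h'
    apply hleaf
    rw [← e, h.hasChild]
    exact Or.inl h'
  have hL' : LR (sp r g) u := by
    obtain ⟨ρ, h5, h6⟩ := hL
    exact ⟨ρ, (sp_none _).2 (Or.inl h5), h6⟩
  have hny := h2
  rw [← e, h.ny] at hny
  refine ⟨r, hS, ?_, ⟨h.root_m, hleaf'⟩, hL', ⟨h.root_r, h.leaf_r, h.lt, hny.2⟩⟩
  rw [mem_CS]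
  refine ⟨h.forest, hny.1, ?_, ?_⟩
  · rw [← h.bar (l := l) hL', e]; exact h3
  · intro u' hu'
    obtain ⟨ρ, h5, h6⟩ := hL'
    rcases lt_trichotomy u' u with hc | hc | hc
    · exact ⟨hc, ρ, h5, hc.trans h6⟩
    · subst hc
      exact absurd h.root_m (oldNode_ne_none hu'.1)
    · rw [← h.rem (l := l) hleaf' hc, e] at hu'
      have := (h4 u' hu').1
      rw [Fin.lt_def] at hc
      omega

lemma CS_step (hk : 1 ≤ k) (u : Fin n) :
    ∑ f ∈ CS n k (u + 1), wt ((u : ℕ) + 1) f = ∑ f ∈ CS n k u, wt (u : ℕ) f := by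
  obtain ⟨l, hl⟩ : ∃ l : Fin k, (l : ℕ) = k - 1 := ⟨⟨k - 1, by omega⟩, rfl⟩
  have hA : (CS n k (u + 1)).filter (fun f => ¬ removableOldLeaf f u) = CS n k u := by
    ext f
    simp only [Finset.mem_filter, mem_CS]
    constructor
    · rintro ⟨⟨h1, h2, h3, h4⟩, h5⟩
      refine ⟨h1, h2, h3, fun u' hu' => ⟨?_, (h4 u' hu').2⟩⟩
      have h6 := (h4 u' hu').1
      have : (u' : ℕ) ≠ u := fun e => h5 (Fin.ext e ▸ hu')
      omega
    · rintro ⟨h1, h2, h3, h4⟩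
      refine ⟨⟨h1, h2, h3, fun u' hu' => ⟨?_, (h4 u' hu').2⟩⟩, fun h5 => ?_⟩
      · have h6 := (h4 u' hu').1; omega
      · have h6 := (h4 u h5).1; omega
  rw [← Finset.sum_filter_add_sum_filter_not (CS n k (u + 1)) (fun f => removableOldLeaf f u), hA,
    ← eq_sub_iff_add_eq, ← Finset.sum_sub_distrib]
  rw [← Finset.sum_filter_of_ne (s := CS n k u)
    (p := fun f => RL f u ∧ LR f u ∧ ∃ r, RL f r ∧ r < u)]
  swap
  · intro f _ hne
    by_contra hc
    exact hne (by rw [wt_eq_of_not hc, sub_self])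
  symm
  have hex : ∀ f ∈ (CS n k u).filter (fun f => RL f u ∧ LR f u ∧ ∃ r, RL f r ∧ r < u),
      ∃ r, Op1 f u r := fun f hf => exists_Op1 (Finset.mem_filter.1 hf).2.2.2
  refine Finset.sum_bij (fun f hf => mg l (hex f hf).choose u f) ?_ ?_ ?_ ?_
  · intro f hf
    have ho := (hex f hf).choose_spec
    rw [Finset.mem_filter] at hf ⊢
    exact op1_forward hl hf.1 hf.2.1 hf.2.2.1 ho
  · intro f hf f' hf' e
    have ho := (hex f hf).choose_spec
    have ho' := (hex f' hf').choose_spec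
    have h1 := ho.mgOk ((mem_CS _ _).1 (Finset.mem_filter.1 hf).1).1 (Finset.mem_filter.1 hf).2.1.1
    have h1' := ho'.mgOk ((mem_CS _ _).1 (Finset.mem_filter.1 hf').1).1
      (Finset.mem_filter.1 hf').2.1.1
    have e1 := congrFun e u
    rw [h1.mg_m, h1'.mg_m] at e1
    have e2 : (hex f hf).choose = (hex f' hf').choose := congrArg Prod.fst (Option.some.inj e1)
    rw [← h1.sp_mg (l := l), ← h1'.sp_mg (l := l), e, e2]
  · intro g hg
    rw [Finset.mem_filter] at hg
    obtain ⟨r, hS, h1, h2, h3, h4⟩ := op1_backward hl hg.1 hg.2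
    have hmem : sp r g ∈ (CS n k u).filter
        (fun f => RL f u ∧ LR f u ∧ ∃ r, RL f r ∧ r < u) := by
      rw [Finset.mem_filter]
      exact ⟨h1, h2, h3, r, ⟨h4.root, h4.leaf⟩, h4.lt⟩
    refine ⟨sp r g, hmem, ?_⟩
    have := (hex _ hmem).choose_spec.unique h4
    rw [this, hS.mg_sp]
  · intro f hf
    have ho := (hex f hf).choose_spec
    have h1 := ho.mgOk ((mem_CS _ _).1 (Finset.mem_filter.1 hf).1).1 (Finset.mem_filter.1 hf).2.1.1
    rw [op1_wt h1 ho (Finset.mem_filter.1 hf).2.1.2 (Finset.mem_filter.1 hf).2.2.1]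

lemma CS_chain (hk : 1 ≤ k) (t : ℕ) (ht : t ≤ n) :
    ∑ f ∈ CS n k t, wt t f = ∑ f ∈ CS n k 0, wt 0 f := by
  induction t with
  | zero => rfl
  | succ t ih =>
    rw [← ih (by omega)]
    exact CS_step hk ⟨t, by omega⟩

end Steps

section Op2
variable {n k : ℕ}

/-- `m` is the largest root -/
def MR (f : Fin n → Option (Fin n × Fin k)) (m : Fin n) : Prop :=
  f m = none ∧ ∀ q, f q = none → q ≤ m

/-- the rightmost tree is a singleton -/
def LastSing (f : Fin n → Option (Fin n × Fin k)) : Prop := ∃ m, MR f m ∧ ¬ hasChild f m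

variable {f g : Fin n → Option (Fin n × Fin k)} {r m u : Fin n} {l : Fin k}

lemma MR.unique {m' : Fin n} (h : MR f m) (h' : MR f m') : m = m' :=
  le_antisymm (h'.2 _ h.1) (h.2 _ h'.1)

lemma exists_MR (hn : 1 ≤ n) (hf : IsForest f) : ∃ m, MR f m := by
  have h0 : f ⟨0, hn⟩ = none := by
    by_contra hc
    obtain ⟨⟨y, s⟩, hy⟩ := Option.ne_none_iff_exists'.1 hc
    have := hf _ _ _ hy
    rw [Fin.lt_def] at this
    simp at this
  obtain ⟨m, h1, h2⟩ := Finset.exists_max_image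
    (Finset.univ.filter fun r => f r = none) id ⟨⟨0, hn⟩, by simpa using h0⟩
  simp only [Finset.mem_filter, Finset.mem_univ, true_and, id] at h1 h2
  exact ⟨m, h1, h2⟩

lemma rlcard : siStat f = (Finset.univ.filter fun v => RL f v).card := by
  unfold siStat
  congr 1
  ext v
  rw [Finset.mem_filter, Finset.mem_filter]
  rfl

lemma lastSing_mem (h : LastSing f) (hf : f ∈ NYS n k) : f ∈ CS n k n := by
  obtain ⟨m, hm, hc⟩ := h
  rw [mem_NYS] at hf
  rw [mem_CS]
  refine ⟨hf.1, hf.2, ⟨m, hm.1, hm.2, Or.inl hc⟩, ?_⟩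
  rintro u ⟨_, _, r, s, h1, h2, _, _, h3⟩
  have hrm : r < m := lt_of_le_of_ne (hm.2 r h2) (by rintro rfl; exact hc ⟨u, s, h1⟩)
  exact ⟨u.2, m, hm.1, h3 m hm.1 hrm⟩

lemma CS_sub (t : ℕ) (hf : f ∈ CS n k t) : f ∈ NYS n k := (Finset.mem_filter.1 hf).1

lemma lastSing_wt (h : LastSing f) :
    wt n f = (1 + X) * brk (siStat f) * (X ^ oleafStat f * (1 + X) ^ ointStat f) := by
  obtain ⟨m, hm, hc⟩ := h
  have e1 : j1S n f = {m} := by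
    ext v
    simp only [j1S, Finset.mem_filter, Finset.mem_univ, true_and, Finset.mem_singleton]
    constructor
    · rintro ⟨h1, h2⟩
      by_contra hv
      exact h2 ⟨v.2, m, hm.1, lt_of_le_of_ne (hm.2 v h1.1) hv⟩
    · rintro rfl
      exact ⟨⟨hm.1, hc⟩, fun h => by
        obtain ⟨_, ρ, h1, h2⟩ := h
        exact absurd (hm.2 ρ h1) (not_le.2 h2)⟩
  have e0 : j0S n f = (Finset.univ.filter fun v => RL f v).erase m := by
    ext v
    simp only [j0S, Finset.mem_filter, Finset.mem_univ, true_and, Finset.mem_erase]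
    constructor
    · rintro ⟨h1, _, ρ, h2, h3⟩
      refine ⟨?_, h1⟩
      rintro rfl
      exact absurd (hm.2 ρ h2) (not_le.2 h3)
    · rintro ⟨h1, h2⟩
      exact ⟨h2, v.2, m, hm.1, lt_of_le_of_ne (hm.2 v h2.1) h1⟩
  have c0 : (j0S n f).card + 1 = siStat f := by
    rw [e0, Finset.card_erase_add_one, rlcard]
    simp only [Finset.mem_filter, Finset.mem_univ, true_and]
    exact ⟨hm.1, hc⟩
  unfold wt
  rw [c0, e1, Finset.card_singleton]
  ring

lemma op2_forward (hl : (l : ℕ) = k - 1) (hf : f ∈ NYS n k) (hm : MR f m) (hc : hasChild f m)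
    (ho : Op1 f m r) :
    mg l r m f ∈ CS n k n ∧ MR (mg l r m f) r ∧
      wt n (mg l r m f) = (1 + X) * brk (siStat f) * (X ^ oleafStat f * (1 + X) ^ ointStat f) := by
  rw [mem_NYS] at hf
  have h := ho.mgOk hf.1 hm.1
  have hMR : MR (mg l r m f) r := by
    refine ⟨h.root_mg, fun r' hr' => ?_⟩
    rw [mg_none] at hr'
    by_contra hc
    exact hr'.2 ⟨not_le.1 hc, hm.2 _ hr'.1⟩
  have hRL : ∀ v, RL (mg l r m f) v ↔ RL f v ∧ v ≠ r := by
    intro v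
    unfold RL
    rw [mg_none, h.hasChild]
    constructor
    · rintro ⟨⟨h1, h2⟩, h3⟩
      push Not at h3
      exact ⟨⟨h1, h3.1⟩, h3.2⟩
    · rintro ⟨⟨h1, h2⟩, h3⟩
      refine ⟨⟨h1, fun h5 => ?_⟩, by tauto⟩
      rcases h5.2.lt_or_eq with h6 | h6
      · exact h2 (ho.between v h1 h5.1 h6)
      · exact h2 (h6 ▸ hc)
  have hLR : ∀ v, RL (mg l r m f) v → LR (mg l r m f) v := by
    intro v hv
    refine ⟨r, h.root_mg, lt_of_le_of_ne (hMR.2 v hv.1) ((hRL v).1 hv).2⟩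
  refine ⟨?_, hMR, ?_⟩
  · rw [mem_CS]
    refine ⟨h.isForest, h.ny.2 ⟨hf.2, ho.between⟩, ⟨r, hMR.1, hMR.2, Or.inr ?_⟩, ?_⟩
    · intro x j hj hx
      rw [h.child_r] at hx
      rw [hx.1] at hj
      omega
    · rintro u ⟨h1, h2, q, s, h3, h4, _, _, h7⟩
      have hqr : q ≠ r := by
        rintro rfl
        rw [h.hasChild] at h2
        push Not at h2
        obtain ⟨y, s', h8, h9⟩ := h1
        rw [h3] at h8
        simp only [Option.some.injEq, Prod.mk.injEq] at h8
        have h10 := h9 m ⟨l, by rw [← h8.1]; exact h.mg_m⟩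
        rw [h.child_r] at h3
        have : u = m := le_antisymm h3.2.2.2 h10
        exact h2.1 (this ▸ hc)
      exact ⟨u.2, r, h.root_mg, h7 r h.root_mg (lt_of_le_of_ne (hMR.2 q h4) hqr)⟩
  · have e1 : j1S n (mg l r m f) = ∅ := by
      ext v
      simp only [j1S, Finset.mem_filter, Finset.mem_univ, true_and, Finset.notMem_empty, iff_false]
      rintro ⟨h1, h2⟩
      exact h2 ⟨v.2, hLR v h1⟩
    have e0 : j0S n (mg l r m f) = (Finset.univ.filter fun v => RL f v).erase r := by
      ext v
      simp only [j0S, Finset.mem_filter, Finset.mem_univ, true_and, Finset.mem_erase]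
      constructor
      · rintro ⟨h1, _⟩
        exact ((hRL v).1 h1).symm
      · rintro ⟨h1, h2⟩
        have := (hRL v).2 ⟨h2, h1⟩
        exact ⟨this, v.2, hLR v this⟩
    have c0 : (j0S n (mg l r m f)).card + 1 = siStat f := by
      rw [e0, Finset.card_erase_add_one, rlcard]
      simp only [Finset.mem_filter, Finset.mem_univ, true_and]
      exact ⟨ho.root, ho.leaf⟩
    unfold wt
    rw [c0, e1, Finset.card_empty, h.oleaf_int hc, h.oint_int hc]
    ring

/-- In a forest of the bar class without young leaves whose last tree is not a singleton,
the largest grand child of the last root is internal or removable. -/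
lemma last_old (hl : (l : ℕ) = k - 1) (hny : NoYoungLeaf g) (hb : inBarClass g)
    (hf : IsForest g) (hr : MR g r) (hc : hasChild g r) :
    ∃ m, SpOk l g r m ∧ oldNode g m ∧ (hasChild g m ∨ removableOldLeaf g m) := by
  have hslot : ∀ (x : Fin n) (j : Fin k), (j : ℕ) < k - 1 → g x ≠ some (r, j) := by
    obtain ⟨q, h1, h2, h3⟩ := hb
    have : q = r := MR.unique ⟨h1, h2⟩ hr
    subst this
    exact h3.resolve_left (not_not.2 hc)
  obtain ⟨x0, s0, hx0⟩ := hc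
  obtain ⟨m, h1, h2⟩ := Finset.exists_max_image
    (Finset.univ.filter fun x => ∃ t, g x = some (r, t)) id ⟨x0, by simpa using ⟨s0, hx0⟩⟩
  simp only [Finset.mem_filter, Finset.mem_univ, true_and, id] at h1 h2
  obtain ⟨s, hs⟩ := h1
  have hold : oldNode g m := ⟨r, s, hs, h2⟩
  refine ⟨m, ⟨hf, hr.1, ⟨s, hs⟩, fun x t hx => h2 x ⟨t, hx⟩, ?_, ?_⟩, hold, ?_⟩
  · intro x t hx
    by_contra hc
    refine hslot x t ?_ hx
    have : (t : ℕ) ≠ l := fun e => hc (Fin.ext e)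
    have := t.2
    omega
  · intro x hx h3
    exact absurd (hr.2 x hx) (not_le.2 h3)
  · by_cases hm : hasChild g m
    · exact Or.inl hm
    · right
      refine ⟨hold, hm, r, s, hs, hr.1, ?_, hslot, ?_⟩
      · rintro x ⟨t, hx⟩ hxm
        by_contra hxc
        refine hny x ⟨⟨⟨r, t, hx⟩, ?_⟩, hxc⟩
        rintro ⟨y, s', h5, h6⟩
        rw [hx] at h5
        simp only [Option.some.injEq, Prod.mk.injEq] at h5
        exact hxm (le_antisymm (h2 x ⟨t, hx⟩) (h6 m ⟨s, by rw [← h5.1]; exact hs⟩))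
      · intro x hx h3
        exact absurd (hr.2 x hx) (not_le.2 h3)

lemma op2_backward (hl : (l : ℕ) = k - 1) (hg : g ∈ CS n k n) (hr : MR g r) (hc : hasChild g r) :
    ∃ m, SpOk l g r m ∧ sp r g ∈ NYS n k ∧ MR (sp r g) m ∧ hasChild (sp r g) m ∧
      Op1 (sp r g) m r := by
  rw [mem_CS] at hg
  obtain ⟨h1, h2, h3, h4⟩ := hg
  obtain ⟨m, hS, hold, hm⟩ := last_old hl h2 h3 h1 hr hc
  have h := hS.mgOk
  have e : mg l r m (sp r g) = g := hS.mg_sp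
  have hm' : hasChild g m := by
    refine hm.resolve_right fun h5 => ?_
    obtain ⟨_, ρ, h6, h7⟩ := h4 m h5
    have := hr.2 ρ h6
    exact absurd (h.lt.trans h7) (not_lt.2 this)
  have hny := h2
  rw [← e, h.ny] at hny
  rw [← e, h.hasChild] at hm'
  refine ⟨m, hS, (mem_NYS _).2 ⟨h.forest, hny.1⟩, ⟨h.root_m, ?_⟩,
    hm'.resolve_right h.lt.ne', ⟨h.root_r, h.leaf_r, h.lt, hny.2⟩⟩
  intro x hx
  rw [sp_none] at hx
  rcases hx with hx | ⟨t, hx⟩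
  · exact (hr.2 x hx).trans h.lt.le
  · exact hS.max_m x t hx

lemma op2_sum (hn : 1 ≤ n) (hk : 1 ≤ k) :
    ∑ f ∈ NYS n k, (1 + X) * brk (siStat f) * (X ^ oleafStat f * (1 + X) ^ ointStat f)
      = ∑ f ∈ CS n k n, wt n f := by
  obtain ⟨l, hl⟩ : ∃ l : Fin k, (l : ℕ) = k - 1 := ⟨⟨k - 1, by omega⟩, rfl⟩
  rw [← Finset.sum_filter_add_sum_filter_not (NYS n k) LastSing,
    ← Finset.sum_filter_add_sum_filter_not (CS n k n) LastSing]
  congr 1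
  · have : (NYS n k).filter LastSing = (CS n k n).filter LastSing := by
      ext f
      simp only [Finset.mem_filter]
      exact ⟨fun h => ⟨lastSing_mem h.2 h.1, h.2⟩, fun h => ⟨CS_sub _ h.1, h.2⟩⟩
    rw [this]
    refine Finset.sum_congr rfl fun f hf => ?_
    rw [lastSing_wt (Finset.mem_filter.1 hf).2]
  · rw [← Finset.sum_filter_of_ne (s := (NYS n k).filter fun f => ¬ LastSing f)
      (p := fun f => ∃ r, RL f r)]
    swap
    · intro f _ hne
      by_contra hc
      apply hne
      have : siStat f = 0 := by
        rw [rlcard, Finset.card_eq_zero, Finset.filter_eq_empty_iff]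
        exact fun v _ hv => hc ⟨v, hv⟩
      rw [this]
      simp [brk]
    have hex : ∀ f ∈ ((NYS n k).filter fun f => ¬ LastSing f).filter (fun f => ∃ r, RL f r),
        ∃ p : Fin n × Fin n, MR f p.1 ∧ hasChild f p.1 ∧ Op1 f p.1 p.2 := by
      intro f hf
      simp only [Finset.mem_filter] at hf
      obtain ⟨⟨h1, h2⟩, r, hr⟩ := hf
      obtain ⟨m, hm⟩ := exists_MR hn ((mem_NYS f).1 h1).1
      have hc : hasChild f m := by
        by_contra hc
        exact h2 ⟨m, hm, hc⟩
      obtain ⟨r', hr'⟩ := exists_Op1 (f := f) (u := m)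
        ⟨r, hr, lt_of_le_of_ne (hm.2 r hr.1) (by rintro rfl; exact hr.2 hc)⟩
      exact ⟨(m, r'), hm, hc, hr'⟩
    refine Finset.sum_bij (fun f hf => mg l (hex f hf).choose.2 (hex f hf).choose.1 f) ?_ ?_ ?_ ?_
    · intro f hf
      obtain ⟨hm, hc, ho⟩ := (hex f hf).choose_spec
      simp only [Finset.mem_filter] at hf ⊢
      obtain ⟨h1, h2, _⟩ := op2_forward hl hf.1.1 hm hc ho
      refine ⟨h1, ?_⟩
      rintro ⟨q, h3, h4⟩
      have := h3.unique h2
      apply h4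
      rw [this, (ho.mgOk ((mem_NYS f).1 hf.1.1).1 hm.1).hasChild]
      exact Or.inr rfl
    · intro f hf f' hf' e
      obtain ⟨hm, hc, ho⟩ := (hex f hf).choose_spec
      obtain ⟨hm', hc', ho'⟩ := (hex f' hf').choose_spec
      simp only [Finset.mem_filter] at hf hf'
      have h2 := (op2_forward hl hf.1.1 hm hc ho).2.1
      have h2' := (op2_forward hl hf'.1.1 hm' hc' ho').2.1
      have h1 := ho.mgOk ((mem_NYS f).1 hf.1.1).1 hm.1
      have h1' := ho'.mgOk ((mem_NYS f').1 hf'.1.1).1 hm'.1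
      rw [e] at h2
      have e2 := h2.unique h2'
      rw [← h1.sp_mg (l := l), ← h1'.sp_mg (l := l), e, e2]
    · intro g hg
      simp only [Finset.mem_filter] at hg
      obtain ⟨r, hr⟩ := exists_MR hn ((mem_CS _ g).1 hg.1).1
      have hc : hasChild g r := by
        by_contra hc
        exact hg.2 ⟨r, hr, hc⟩
      obtain ⟨m, hS, h1, h2, h3, h4⟩ := op2_backward hl hg.1 hr hc
      have hmem : sp r g ∈ ((NYS n k).filter fun f => ¬ LastSing f).filter
          (fun f => ∃ r, RL f r) := by
        simp only [Finset.mem_filter]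
        refine ⟨⟨h1, ?_⟩, r, h4.root, h4.leaf⟩
        rintro ⟨q, h5, h6⟩
        rw [h5.unique h2] at h6
        exact h6 h3
      refine ⟨sp r g, hmem, ?_⟩
      obtain ⟨hm, hc, ho⟩ := (hex _ hmem).choose_spec
      have e1 := hm.unique h2
      rw [e1] at ho
      have e2 := ho.unique h4
      rw [e1, e2, hS.mg_sp]
    · intro f hf
      obtain ⟨hm, hc, ho⟩ := (hex f hf).choose_spec
      simp only [Finset.mem_filter] at hf
      rw [(op2_forward hl hf.1.1 hm hc ho).2.2]

lemma mem_CS_zero (f : Fin n → Option (Fin n × Fin k)) : f ∈ CS n k 0 ↔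
    IsForest f ∧ NoYoungLeaf f ∧ inBarClass f ∧ ∀ u, ¬ removableOldLeaf f u := by
  simp [mem_CS]

lemma wt_zero (hn : 1 ≤ n) (hk : 1 ≤ k) (hf : f ∈ CS n k 0) :
    oleafStat f < (n - 1) / 2 + 1 ∧
    wt 0 f = (1 + X) * (X ^ oleafStat f * (1 + X) ^ (n - 1 - 2 * oleafStat f)) := by
  obtain ⟨l, hl⟩ : ∃ l : Fin k, (l : ℕ) = k - 1 := ⟨⟨k - 1, by omega⟩, rfl⟩
  rw [mem_CS_zero] at hf
  obtain ⟨h1, h2, h3, h4⟩ := hf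
  have hcard := card_old_eq h2
  have hpos : 1 ≤ ointStat f + siStat f := by
    obtain ⟨r, hr⟩ := exists_MR hn h1
    by_cases hc : hasChild f r
    · obtain ⟨m, _, hold, hm⟩ := last_old hl h2 h3 h1 hr hc
      have : 0 < ointStat f := by
        unfold ointStat
        apply Finset.card_pos.2
        exact ⟨m, by simpa using ⟨hold, hm.resolve_right (h4 m)⟩⟩
      omega
    · have : 0 < siStat f := by
        unfold siStat
        apply Finset.card_pos.2
        exact ⟨r, by simpa using ⟨hr.1, hc⟩⟩
      omega
  refine ⟨by omega, ?_⟩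
  have e0 : j0S 0 f = ∅ := by simp [j0S]
  have e1 : (j1S 0 f).card = siStat f := by
    rw [rlcard]; simp [j1S]
  unfold wt
  rw [e0, e1, show ointStat f + siStat f = (n - 1 - 2 * oleafStat f) + 1 by omega]
  simp [brk, pow_succ]
  ring

lemma gamma_sum (hn : 1 ≤ n) (hk : 1 ≤ k) :
    (1 + X) * ∑ i ∈ Finset.range ((n - 1) / 2 + 1),
      C ((Nat.card {f : Fin n → Option (Fin n × Fin k) //
            IsForest f ∧ inBarClass f ∧ oleafStat f = i ∧ NoYoungLeaf f ∧
              ∀ u, ¬ removableOldLeaf f u} : ℕ) : ℝ) *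
        X ^ i * (1 + X) ^ (n - 1 - 2 * i) = ∑ f ∈ CS n k 0, wt 0 f := by
  rw [Finset.sum_congr rfl fun f hf => (wt_zero hn hk hf).2, ← Finset.mul_sum]
  congr 1
  rw [← Finset.sum_fiberwise_of_maps_to (s := CS n k 0)
    (t := Finset.range ((n - 1) / 2 + 1)) (g := oleafStat)
    (fun f hf => Finset.mem_range.2 (wt_zero hn hk hf).1)]
  refine Finset.sum_congr rfl fun i _ => ?_
  rw [Finset.sum_congr rfl (g := fun _ => X ^ i * (1 + X) ^ (n - 1 - 2 * i))
    (fun f hf => by rw [(Finset.mem_filter.1 hf).2]), Finset.sum_const]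
  have : Nat.card {f : Fin n → Option (Fin n × Fin k) //
            IsForest f ∧ inBarClass f ∧ oleafStat f = i ∧ NoYoungLeaf f ∧
              ∀ u, ¬ removableOldLeaf f u} = ((CS n k 0).filter fun f => oleafStat f = i).card := by
    rw [Nat.card_eq_fintype_card]
    refine Fintype.card_of_subtype _ fun f => ?_
    rw [Finset.mem_filter, mem_CS_zero]
    tauto
  rw [this, nsmul_eq_mul]
  simp [mul_assoc]

end Op2

section Final
variable {n k : ℕ}

lemma reflect_term (i m j : ℕ) :
    Polynomial.reflect (2 * i + m + j) ((X : Polynomial ℝ) ^ i * (1 + X) ^ m)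
      = X ^ (i + j) * (1 + X) ^ m := by
  have h1 : Polynomial.reflect m ((1 + X : Polynomial ℝ) ^ m) = (1 + X) ^ m := by
    induction m with
    | zero => simp
    | succ m ih =>
      rw [pow_succ, Polynomial.reflect_mul _ _ (F := m) (G := 1), ih]
      · congr 1
        rw [Polynomial.reflect_add, Polynomial.reflect_one_X, ← Polynomial.C_1,
          Polynomial.reflect_C]
        simp [add_comm]
      · refine Polynomial.natDegree_pow_le.trans ?_
        have : (1 + X : Polynomial ℝ).natDegree ≤ 1 := by compute_degree
        nlinarith
      · compute_degree
  rw [show 2 * i + m + j = (2 * i + j) + m by ring, Polynomial.reflect_mul, h1,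
    Polynomial.reflect_monomial, Polynomial.revAt_le (by omega)]
  · congr 2; omega
  · simp; omega
  · refine Polynomial.natDegree_pow_le.trans ?_
    have : (1 + X : Polynomial ℝ).natDegree ≤ 1 := by compute_degree
    nlinarith

lemma brk_tel (m : ℕ) : (1 - X) * brk m = 1 - X ^ m := by
  unfold brk
  exact mul_neg_geom_sum X m

lemma A_sub_reflect : Apoly k n - Polynomial.reflect n (Apoly k n) =
    (1 - X) * ∑ f ∈ NYS n k, brk (siStat f) * (X ^ oleafStat f * (1 + X) ^ ointStat f) := by
  rw [Apoly_eq_NY]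
  have hs : Polynomial.reflect n (∑ f ∈ NYS n k, (X : Polynomial ℝ) ^ oleafStat f *
      (1 + X) ^ ointStat f) = ∑ f ∈ NYS n k, X ^ (oleafStat f + siStat f) *
      (1 + X) ^ ointStat f := by
    have : ∀ s : Finset (Fin n → Option (Fin n × Fin k)), s ⊆ NYS n k →
      Polynomial.reflect n (∑ f ∈ s, (X : Polynomial ℝ) ^ oleafStat f *
      (1 + X) ^ ointStat f) = ∑ f ∈ s, X ^ (oleafStat f + siStat f) *
      (1 + X) ^ ointStat f := by
      intro s
      induction s using Finset.induction_on with
      | empty => simp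
      | insert f s hf ih =>
        intro hsub
        rw [Finset.sum_insert hf, Finset.sum_insert hf, Polynomial.reflect_add,
          ih (fun x hx => hsub (Finset.mem_insert_of_mem hx))]
        congr 1
        have hc := card_old_eq ((mem_NYS f).1 (hsub (Finset.mem_insert_self _ _))).2
        have := reflect_term (oleafStat f) (ointStat f) (siStat f)
        rw [← hc] at this
        exact this
    exact this _ (Finset.Subset.refl _)
  rw [hs, ← Finset.sum_sub_distrib, Finset.mul_sum]
  refine Finset.sum_congr rfl fun f _ => ?_
  rw [← mul_assoc, brk_tel]
  ring

lemma one_sub_X_ne : (1 - X : Polynomial ℝ) ≠ 0 := by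
  intro h
  have := congrArg (Polynomial.eval 0) h
  simp at this

lemma one_add_X_ne : (1 + X : Polynomial ℝ) ≠ 0 := by
  intro h
  have := congrArg (Polynomial.eval 0) h
  simp at this

lemma a_unique (hn : 1 ≤ n) {A a b : Polynomial ℝ} (hA : n = 1 → A = 1)
    (hdec : A = a + X * b)
    (ha1 : a.natDegree ≤ n - 1) (ha2 : a.reflect (n - 1) = a)
    (hb1 : b.natDegree ≤ n - 2) (hb2 : b.reflect (n - 2) = b) :
    A - A.reflect n = (1 - X) * a := by
  have hX : ∀ p : Polynomial ℝ, p.natDegree ≤ n - 1 → p.reflect n = X * p.reflect (n - 1) := by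
    intro p hp
    have h := Polynomial.reflect_mul (1 : Polynomial ℝ) p (F := 1) (G := n - 1) (by simp) hp
    rw [one_mul, show 1 + (n - 1) = n by omega] at h
    rw [h, ← Polynomial.C_1, Polynomial.reflect_C]
    simp
  rcases Nat.lt_or_ge n 2 with h2 | h2
  · have h1 : n = 1 := by omega
    have hA1 := hA h1
    subst h1
    have hb0 : b = C (b.coeff 0) := Polynomial.eq_C_of_natDegree_le_zero (by simpa using hb1)
    have ha0 : a = C (a.coeff 0) := Polynomial.eq_C_of_natDegree_le_zero (by simpa using ha1)
    have hbz : b.coeff 0 = 0 := by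
      have := congrArg (fun p => Polynomial.coeff p 1) (hA1.symm.trans hdec)
      rw [ha0, Polynomial.coeff_add, Polynomial.coeff_C_succ, show (1 : ℕ) = 0 + 1 from rfl,
        Polynomial.coeff_X_mul] at this
      simp [Polynomial.coeff_one] at this
      exact this.symm
    rw [hbz, Polynomial.C_0] at hb0
    rw [hb0, mul_zero, add_zero] at hdec
    rw [hdec, hX a ha1, ha2]
    ring
  · have hb : (X * b).reflect n = X * b := by
      have h := Polynomial.reflect_mul (X : Polynomial ℝ) b (F := 2) (G := n - 2)
        (by simp) hb1
      rw [show 2 + (n - 2) = n by omega] at h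
      rw [h, hb2]
      congr 1
      have := Polynomial.reflect_monomial (R := ℝ) 2 1
      rw [pow_one, Polynomial.revAt_le (by omega)] at this
      simpa using this
    rw [hdec, Polynomial.reflect_add, hb, hX a ha1, ha2]
    ring

lemma Apoly_one : Apoly k 1 = 1 := by
  unfold Apoly
  rw [Fintype.sum_unique]
  simp [excStat, cycStat]

end Final

/-- The first half of the main theorem: in the symmetric decomposition
`A_n^{(k)} = a + x·b` (with `a` palindromic of degree at most `n-1` and `b` palindromic
of degree at most `n-2`), the part `a` is γ-positive with center `(n-1)/2`:
`a = Σ_{i=0}^{⌊(n-1)/2⌋} γ̄_{n,k,i} x^i (1+x)^{n-1-2i}`, where `γ̄_{n,k,i}` counts the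
increasing pruned even `k`-ary forests on `{1,…,n}` whose rightmost tree is a singleton
or has its first `k-1` root-children as leaves, with `i` old leaves, no young leaves,
and no removable old leaves. -/
theorem a_part_gamma_positive (n k : ℕ) (hn : 1 ≤ n) (hk : 1 ≤ k)
    (a b : Polynomial ℝ)
    (hdec : Apoly k n = a + X * b)
    (ha1 : a.natDegree ≤ n - 1) (ha2 : a.reflect (n - 1) = a)
    (hb1 : b.natDegree ≤ n - 2) (hb2 : b.reflect (n - 2) = b) :
    a = ∑ i ∈ Finset.range ((n - 1) / 2 + 1),
      C ((Nat.card {f : Fin n → Option (Fin n × Fin k) //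
            IsForest f ∧ inBarClass f ∧ oleafStat f = i ∧ NoYoungLeaf f ∧
              ∀ u, ¬ removableOldLeaf f u} : ℕ) : ℝ) *
        X ^ i * (1 + X) ^ (n - 1 - 2 * i) := by
  have h1 := a_unique hn (A := Apoly k n) (by rintro rfl; exact Apoly_one) hdec ha1 ha2 hb1 hb2
  rw [A_sub_reflect] at h1
  have h2 := mul_left_cancel₀ one_sub_X_ne h1
  apply mul_left_cancel₀ one_add_X_ne
  rw [gamma_sum hn hk, ← CS_chain hk n le_rfl, ← op2_sum hn hk, ← h2, Finset.mul_sum]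
  refine Finset.sum_congr rfl fun f _ => ?_
  ring

end
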